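/- Let k ≥ 3 and let A = (a_{i,j}) be a k×k symmetric matrix of strictly positive integers with constant row sum d, satisfying: (1) there is a constant C > 0 with C·a_{i,i} > B_i for each i, where B_i = max{a_{i,ℓ} : ℓ ≠ i}; and (2) when not all intra-cluster degrees a_{i,i} are equal, for all i, j with a_{i,i} < a_{j,j} there exists δ_{i,j} ∈ (0, 1/4) with a_{i,i} ≥ (1/2 + 2δ_{i,j})·a_{j,j}, and there exist ε_{i,j} ∈ (0, 1/4) such that for all i, j with a_{i,i} > a_{j,j} and B_j > a_{i,i} − a_{j,j}, one has (1/2 − 2ε_{i,j})·a_{i,i} ≥ B_j. Then, provided all entries of A are sufficiently large (depending only on k, C and the constants δ_{i,j}, ε_{i,j}), the probability under the RSBM G^n_A that there exists a partition {D_1, …, D_k} of the kn vertices into sets of size n, with {D_1, …, D_k} ≠ {C_1, …, C_k} as an unordered family, such that the induced subgraph on D_i is a_{i,i}-regular and the bipartite subgraph between D_i and D_j is a_{i,j}-bipartite-regular for all i ≠ j, tends to 0 as n → ∞. That is, the clusters C_1, …, C_k are asymptotically almost surely unique. -/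

import Mathlib

/-!
Fix the planted partition `p`, write `Gs p a` for the finite set of graphs compatible with `p`, and
bound the fraction of them that are also compatible with an equipartition `q` other than `p` (up to
renaming the clusters). The argument needs the entries of `a` to be large in terms of `k` only.

*Expansion.* A switching argument (`switch_count`, `contain_bound`) shows that the fraction of
graphs in `Gs p a` containing a prescribed edge set `F` is at most `(2 D / n) ^ |F|`, where `D`
bounds the relevant entries of `a`. If a small set `Y` has too few unique neighbours (vertices
joined to exactly one vertex of `Y`), many edges live on few vertices (`expand_fail`). Hence, by a
union bound, outside a fraction `O(1/n)` of the graphs all small sets have about as many unique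
neighbours as they have edge ends (`expand_count`). This is used both for the whole graph and for
the bipartite graphs between two clusters.

*Nearby partitions.* If `G` expands and `q` differs from a relabelling `σ ∘ p` of `p` on a small
set of vertices only, a unique neighbour of that set would have the wrong degree into some cluster
of `q`, so the set is empty (`near_eq`).

*Other partitions.* If `q` is not close to any `σ ∘ p`, some cluster of `p` meets two clusters
`l ≠ l'` of `q` in many vertices (`near_or_split`). Choose `T` disjoint pairs, each made of a
vertex in `l` and a vertex in `l'`, both in the same cluster of `p`. Rewire `G` by redistributing
the private neighbours of each pair (those joined to exactly one of its vertices) between its two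
vertices. Compatibility with `p` survives whenever the two degrees into each cluster are preserved,
which gives `∏ choose(Λ, h)` graphs in each rewiring class (`fibre_lower`). Compatibility with `q`
prescribes, for each vertex `u`, how many of the pairs that `u` sees privately it sees through `l`,
which leaves at most `∏ choose(λ_u, λ_u / 2)` graphs (`fibre_upper`). Up to lower order factors,
both products are `2 ^ λ`, where `λ` counts the private incidences, but each central binomial
coefficient in the second one loses a definite factor; expansion guarantees that there are many
such losses. Comparing the two counts (`rewire`) gives:

* a gain of `2 ^ (d T / 2)` for partitions at an intermediate distance (`medium_bound`), which beats
  the number of such partitions (`near_term`);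
* a gain of `(2 k ^ k) ^ n` for partitions far from `p` (`far_bound`), which beats the number
  `k ^ (k n)` of all colourings of the `k n` vertices.

The union bound over these cases is `bad_count`, and `rsbmP_le` averages it over `p`.
-/

open Filter

/-- `degIn G v S` is the number of neighbours of `v` lying in the set `S`. -/
noncomputable def degIn {V : Type} (G : SimpleGraph V) (v : V) (S : Set V) : ℕ :=
  (S ∩ G.neighborSet v).ncard

/-- `p` partitions the `k * n` labelled vertices into `k` labelled clusters of size `n`. -/
def IsEquiPartition (k n : ℕ) (p : Fin (k * n) → Fin k) : Prop :=
  ∀ i : Fin k, (p ⁻¹' {i}).ncard = n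

/-- The graph `G` is compatible with the partition `p`: every vertex of cluster `i` has
exactly `a i j` neighbours in cluster `j` (so the induced subgraph on cluster `i` is
`a i i`-regular and the bipartite subgraph between clusters `i ≠ j` is
`a i j`-bipartite-regular). -/
def Compat (k n : ℕ) (a : Fin k → Fin k → ℕ) (p : Fin (k * n) → Fin k)
    (G : SimpleGraph (Fin (k * n))) : Prop :=
  ∀ v : Fin (k * n), ∀ j : Fin k, degIn G v (p ⁻¹' {j}) = a (p v) j

/-- Probability under the RSBM (uniform distribution on compatible (partition, graph) pairs)
of an event depending on the partition and the graph. -/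
noncomputable def rsbmP (k n : ℕ) (a : Fin k → Fin k → ℕ)
    (E : (Fin (k * n) → Fin k) → SimpleGraph (Fin (k * n)) → Prop) : ℝ :=
  (({pg : (Fin (k * n) → Fin k) × SimpleGraph (Fin (k * n)) |
      IsEquiPartition k n pg.1 ∧ Compat k n a pg.1 pg.2 ∧ E pg.1 pg.2}).ncard : ℝ) /
    (({pg : (Fin (k * n) → Fin k) × SimpleGraph (Fin (k * n)) |
      IsEquiPartition k n pg.1 ∧ Compat k n a pg.1 pg.2}).ncard : ℝ)

/-! ### Compatible graphs and flips -/

namespace RSBM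
open Finset
open scoped Classical

variable {V : Type} [Fintype V] {k : ℕ}

/-- The neighbours of `v` in the cluster `j` of `p`. -/
noncomputable def nbc (p : V → Fin k) (G : SimpleGraph V) (v : V) (j : Fin k) : Finset V :=
  univ.filter fun u => p u = j ∧ G.Adj v u

/-- Finset-cardinality form of `Compat`. -/
def Cmp (p : V → Fin k) (a : Fin k → Fin k → ℕ) (G : SimpleGraph V) : Prop :=
  ∀ v j, #(nbc p G v j) = a (p v) j

/-- The graphs compatible with `p`. -/
noncomputable def Gs (p : V → Fin k) (a : Fin k → Fin k → ℕ) : Finset (SimpleGraph V) :=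
  univ.filter (Cmp p a)

/-- The graphs compatible with `p` that contain all edges of `F`. -/
noncomputable def GsF (p : V → Fin k) (a : Fin k → Fin k → ℕ) (F : Finset (Sym2 V)) :
    Finset (SimpleGraph V) :=
  (Gs p a).filter fun G => ∀ e ∈ F, e ∈ G.edgeSet

/-- The graph obtained from `G` by letting every vertex `b` see the other vertices through the
permutation `ψ b`: `x` and `y` are adjacent when `ψ y x` and `ψ x y` are adjacent in `G`. -/
def flip (G : SimpleGraph V) (ψ : V → Equiv.Perm V) : SimpleGraph V where
  Adj x y := G.Adj (ψ y x) (ψ x y)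
  symm := ⟨fun _ _ h => G.adj_symm h⟩
  loopless := ⟨fun x h => G.loopless.irrefl _ h⟩

omit [Fintype V] in
lemma flip_adj (G : SimpleGraph V) (ψ : V → Equiv.Perm V) (x y : V) :
    (flip G ψ).Adj x y ↔ G.Adj (ψ y x) (ψ x y) := Iff.rfl

lemma mem_nbc (p : V → Fin k) (G : SimpleGraph V) (v u : V) (j : Fin k) :
    u ∈ nbc p G v j ↔ p u = j ∧ G.Adj v u := by simp [nbc]

/-- A flip preserves compatibility with `p` if only the vertices of `X` use a permutation other than
the identity, all the permutations fix `X` pointwise and preserve the clusters, and the degrees of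
the vertices outside `X` into each cluster come out right. The degrees of the vertices of `X` are
automatically right, as their neighbourhoods are merely permuted inside the clusters. -/
lemma flip_cmp (p : V → Fin k) (a : Fin k → Fin k → ℕ) (G : SimpleGraph V)
    (ψ : V → Equiv.Perm V) (X : Set V) (hG : Cmp p a G)
    (h1 : ∀ b, b ∉ X → ψ b = 1) (h2 : ∀ b, ∀ u ∈ X, ψ b u = u) (h3 : ∀ b x, p (ψ b x) = p x)
    (h4 : ∀ v, v ∉ X → ∀ j, #(univ.filter fun b => p b = j ∧ G.Adj (ψ b v) b) = a (p v) j) :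
    Cmp p a (flip G ψ) := by
  intro v j
  by_cases hv : v ∈ X
  · rw [← hG v j]
    refine Finset.card_bij (fun b _ => ψ v b) ?_ ?_ ?_
    · intro b hb
      rw [mem_nbc] at *
      rw [flip_adj, h2 _ _ hv] at hb
      exact ⟨by rw [h3]; exact hb.1, hb.2⟩
    · intro b _ b' _ h
      exact (ψ v).injective h
    · intro b hb
      refine ⟨(ψ v).symm b, ?_, by simp⟩
      rw [mem_nbc] at *
      rw [flip_adj, h2 _ _ hv]
      refine ⟨?_, by simpa using hb.2⟩
      rw [← h3 v]; simpa using hb.1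
  · rw [← h4 v hv j]
    congr 1
    ext b
    rw [mem_nbc, flip_adj, h1 v hv]
    simp

omit [Fintype V] in
/-- A flip by involutions that fix the set `X` of flipping vertices pointwise is an involution. -/
lemma flip_flip (G : SimpleGraph V) (ψ : V → Equiv.Perm V) (X : Set V)
    (h1 : ∀ b, b ∉ X → ψ b = 1) (h2 : ∀ b, ∀ u ∈ X, ψ b u = u)
    (h3 : ∀ b x, ψ b (ψ b x) = x) : flip (flip G ψ) ψ = G := by
  have key : ∀ x y, ψ (ψ x y) = ψ y := by
    intro x y
    by_cases hy : y ∈ X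
    · rw [h2 _ _ hy]
    · have : ψ x y ∉ X := by
        intro hc
        have := h2 x _ hc
        rw [h3] at this
        rw [← this] at hc
        exact hy hc
      rw [h1 _ hy, h1 _ this]
  ext x y
  rw [flip_adj, flip_adj, key, key, h3, h3]

/-- The permutations that exchange `v` and `v'` as seen from `u` and `u'`. -/
noncomputable def swψ (u u' v v' : V) (b : V) : Equiv.Perm V :=
  if b = u ∨ b = u' then Equiv.swap v v' else 1

/-- Replacing the edges `u v`, `u′ v′` by `u v′`, `u′ v` preserves compatibility when `u`, `u′` lie in
one cluster and `v`, `v′` lie in one cluster. -/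
lemma sw_cmp (p : V → Fin k) (a : Fin k → Fin k → ℕ) (G : SimpleGraph V) (hG : Cmp p a G)
    {u u' v v' : V} (hu : p u' = p u) (hv : p v' = p v)
    (h1 : G.Adj u v) (h2 : G.Adj u' v') (h3 : ¬ G.Adj u v') (h4 : ¬ G.Adj u' v)
    (h5 : v' ≠ u) (h6 : u' ≠ v) : Cmp p a (flip G (swψ u u' v v')) := by
  have n1 : u ≠ v := h1.ne
  have n2 : u' ≠ v' := h2.ne
  have n3 : u ≠ u' := by rintro rfl; exact h3 h2
  have n4 : v ≠ v' := by rintro rfl; exact h3 h1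
  refine flip_cmp p a G _ {u, u'} hG ?_ ?_ ?_ ?_
  · intro b hb
    simp only [Set.mem_insert_iff, Set.mem_singleton_iff] at hb
    simp [swψ, hb]
  · intro b w hw
    simp only [Set.mem_insert_iff, Set.mem_singleton_iff] at hw
    unfold swψ
    split_ifs
    · rcases hw with rfl | rfl
      · exact Equiv.swap_apply_of_ne_of_ne n1 h5.symm
      · exact Equiv.swap_apply_of_ne_of_ne h6 n2
    · rfl
  · intro b x
    unfold swψ
    split_ifs
    · rw [Equiv.swap_apply_def]
      split_ifs with h h'
      · rw [h, hv]
      · rw [h', hv]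
      · rfl
    · rfl
  · intro w hw j
    rw [← hG w j]
    by_cases hw1 : w = v
    · subst hw1
      by_cases hj : p u = j
      · have : (univ.filter fun b => p b = j ∧ G.Adj (swψ u u' w v' b w) b)
            = insert u' ((nbc p G w j).erase u) := by
          ext b
          simp only [mem_filter, mem_univ, true_and, mem_insert, mem_erase, mem_nbc]
          unfold swψ
          by_cases hb : b = u
          · subst hb
            simp [n3, G.adj_comm v' b, h3]
          · by_cases hb' : b = u'
            · subst hb'
              simp [hu, hj, h2.symm]
            · simp [hb, hb']
        rw [this, card_insert_of_notMem, card_erase_of_mem]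
        · have : 0 < #(nbc p G w j) := card_pos.mpr ⟨u, by rw [mem_nbc]; exact ⟨hj, h1.symm⟩⟩
          omega
        · rw [mem_nbc]; exact ⟨hj, h1.symm⟩
        · simp only [mem_erase, mem_nbc]; exact fun h => h4 h.2.2.symm
      · congr 1
        ext b
        simp only [mem_filter, mem_univ, true_and, mem_nbc]
        unfold swψ
        refine and_congr_right fun hb => ?_
        rw [if_neg]
        · rfl
        · rintro (rfl | rfl)
          · exact hj hb
          · exact hj (hu ▸ hb)
    · by_cases hw2 : w = v'
      · subst hw2
        by_cases hj : p u = j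
        · have : (univ.filter fun b => p b = j ∧ G.Adj (swψ u u' v w b w) b)
              = insert u ((nbc p G w j).erase u') := by
            ext b
            simp only [mem_filter, mem_univ, true_and, mem_insert, mem_erase, mem_nbc]
            unfold swψ
            by_cases hb : b = u'
            · subst hb
              simp [n3.symm, G.adj_comm v b, h4]
            · by_cases hb' : b = u
              · subst hb'
                simp [hj, h1.symm]
              · simp [hb, hb']
          rw [this, card_insert_of_notMem, card_erase_of_mem]
          · have : 0 < #(nbc p G w j) :=
              card_pos.mpr ⟨u', by rw [mem_nbc]; exact ⟨hu.trans hj, h2.symm⟩⟩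
            omega
          · rw [mem_nbc]; exact ⟨hu.trans hj, h2.symm⟩
          · simp only [mem_erase, mem_nbc]; exact fun h => h3 h.2.2.symm
        · congr 1
          ext b
          simp only [mem_filter, mem_univ, true_and, mem_nbc]
          unfold swψ
          refine and_congr_right fun hb => ?_
          rw [if_neg]
          · rfl
          · rintro (rfl | rfl)
            · exact hj hb
            · exact hj (hu ▸ hb)
      · congr 1
        ext b
        simp only [mem_filter, mem_univ, true_and, mem_nbc]
        unfold swψ
        refine and_congr_right fun hb => ?_
        split_ifs
        · rw [Equiv.swap_apply_of_ne_of_ne hw1 hw2]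
        · rfl

end RSBM

/-! ### Switchings and prescribed edges -/

namespace RSBM
open Finset
open scoped Classical

variable {V : Type} [Fintype V] {k : ℕ}

lemma swψ_props (G : SimpleGraph V) {u u' v v' : V} (h1 : u ≠ v) (h2 : u' ≠ v') (h5 : v' ≠ u)
    (h6 : u' ≠ v) : flip (flip G (swψ u u' v v')) (swψ u u' v v') = G := by
  refine flip_flip G _ {u, u'} ?_ ?_ ?_
  · intro b hb
    simp only [Set.mem_insert_iff, Set.mem_singleton_iff] at hb
    simp [swψ, hb]
  · intro b w hw
    simp only [Set.mem_insert_iff, Set.mem_singleton_iff] at hw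
    unfold swψ
    split_ifs
    · rcases hw with rfl | rfl
      · exact Equiv.swap_apply_of_ne_of_ne h1 h5.symm
      · exact Equiv.swap_apply_of_ne_of_ne h6 h2
    · rfl
  · intro b x
    unfold swψ
    split_ifs
    · simp
    · rfl

/-- The ordered edges `(u', v')` of `G` that can be switched against the edge `u v`. -/
noncomputable def goodSw (p : V → Fin k) (G : SimpleGraph V) (F : Finset (Sym2 V)) (u v : V) :
    Finset (V × V) :=
  univ.filter fun x => (p x.1 = p u ∧ p x.2 = p v ∧ G.Adj x.1 x.2) ∧
    (¬ G.Adj u x.2 ∧ x.2 ≠ u) ∧ (¬ G.Adj x.1 v ∧ x.1 ≠ v) ∧ s(x.1, x.2) ∉ F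

/-- Double counting: the number of ordered edges from a part `S` of cluster `i` to cluster `j`. -/
lemma card_adj_pairs (p : V → Fin k) (a : Fin k → Fin k → ℕ) (G : SimpleGraph V)
    (hG : Cmp p a G) (S : Finset V) (i j : Fin k) (hS : ∀ x ∈ S, p x = i) :
    #(univ.filter fun x : V × V => x.1 ∈ S ∧ p x.2 = j ∧ G.Adj x.1 x.2) = #S * a i j := by
  have : (univ.filter fun x : V × V => x.1 ∈ S ∧ p x.2 = j ∧ G.Adj x.1 x.2)
      = S.biUnion fun x => (nbc p G x j).image fun y => (x, y) := by
    ext ⟨x, y⟩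
    simp only [mem_filter, mem_univ, true_and, mem_biUnion, mem_image, mem_nbc, Prod.mk.injEq]
    constructor
    · rintro ⟨h1, h2⟩; exact ⟨x, h1, y, h2, rfl, rfl⟩
    · rintro ⟨_, h1, _, h2, rfl, rfl⟩; exact ⟨h1, h2⟩
  rw [this, card_biUnion]
  · rw [sum_congr rfl (fun x _ => card_image_of_injective _ (Prod.mk_right_injective x))]
    rw [sum_congr rfl (fun x hx => by rw [hG x j, hS x hx]), sum_const, smul_eq_mul]
  · intro x _ y _ hxy
    simp only [Function.onFun]
    rw [disjoint_left]
    rintro ⟨z, w⟩ h1 h2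
    simp only [mem_image, Prod.mk.injEq] at h1 h2
    obtain ⟨_, _, h1, _⟩ := h1
    obtain ⟨_, _, h2, _⟩ := h2
    exact hxy (h1.trans h2.symm)

/-- All but boundedly many (and `2 |F|`) of the `a (p u) (p v) * n` ordered edges between the clusters
of `u` and `v` can be switched against `u v`. -/
lemma card_goodSw (p : V → Fin k) (a : Fin k → Fin k → ℕ) (hsym : ∀ i j, a i j = a j i) (n : ℕ)
    (hn : ∀ i, #(univ.filter fun v => p v = i) = n) (G : SimpleGraph V) (hG : Cmp p a G)
    (F : Finset (Sym2 V)) (u v : V) :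
    a (p u) (p v) * n ≤ #(goodSw p G F u v) + 2 * (a (p u) (p v) * (a (p u) (p v) + 1))
      + 2 * #F := by
  set A := a (p u) (p v) with hA
  have hQ := card_adj_pairs p a G hG (univ.filter fun v => p v = p u) (p u) (p v) (by simp)
  rw [hn, ← hA] at hQ
  -- ordered edges whose second end is `u` or a neighbour of `u`
  have hQ1 := card_adj_pairs p a G hG
    ((insert u (nbc p G u (p v))).filter fun x => p x = p v) (p v) (p u) (by simp)
  rw [hsym (p v) (p u), ← hA] at hQ1
  have hQ2 := card_adj_pairs p a G hG
    ((insert v (nbc p G v (p u))).filter fun x => p x = p u) (p u) (p v) (by simp)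
  rw [← hA] at hQ2
  have c1 : #((insert u (nbc p G u (p v))).filter fun x => p x = p v) ≤ A + 1 :=
    (card_filter_le _ _).trans ((card_insert_le _ _).trans (by rw [hG u]))
  have c2 : #((insert v (nbc p G v (p u))).filter fun x => p x = p u) ≤ A + 1 :=
    (card_filter_le _ _).trans ((card_insert_le _ _).trans (by rw [hG v, hsym]))
  have hQ3 : #(univ.filter fun x : V × V => x.1 ≠ x.2 ∧ s(x.1, x.2) ∈ F) ≤ 2 * #F := by
    refine card_le_mul_card_image_of_maps_to (f := fun x : V × V => s(x.1, x.2))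
      (s := univ.filter fun x : V × V => x.1 ≠ x.2 ∧ s(x.1, x.2) ∈ F) (t := F)
      (by intro x hx; exact (mem_filter.1 hx).2.2) 2 ?_
    intro e _
    induction e using Sym2.inductionOn with
    | hf x y =>
      refine (card_le_card (t := {(x, y), (y, x)}) ?_).trans card_le_two
      rintro ⟨z, w⟩ h
      simp only [mem_filter, Sym2.eq_iff] at h
      simp only [mem_insert, mem_singleton, Prod.mk.injEq]
      exact h.2
  have hsub : (univ.filter fun x : V × V => x.1 ∈ (univ.filter fun v => p v = p u) ∧
        p x.2 = p v ∧ G.Adj x.1 x.2) ⊆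
      ((goodSw p G F u v ∪
        (univ.filter fun x : V × V => x.1 ∈ ((insert u (nbc p G u (p v))).filter
          fun x => p x = p v) ∧ p x.2 = p u ∧ G.Adj x.1 x.2).image Prod.swap) ∪
        (univ.filter fun x : V × V => x.1 ∈ ((insert v (nbc p G v (p u))).filter
          fun x => p x = p u) ∧ p x.2 = p v ∧ G.Adj x.1 x.2)) ∪
        (univ.filter fun x : V × V => x.1 ≠ x.2 ∧ s(x.1, x.2) ∈ F) := by
    rintro ⟨x, y⟩ h
    simp only [mem_filter, mem_univ, true_and] at h
    obtain ⟨h1, h2, h3⟩ := h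
    simp only [mem_union, mem_image, mem_filter, mem_univ, true_and, goodSw, mem_insert, mem_nbc,
      Prod.exists, Prod.swap_prod_mk, Prod.mk.injEq]
    by_cases e1 : y = u ∨ G.Adj u y
    · left; left; right
      exact ⟨y, x, ⟨⟨by tauto, h2⟩, h1, h3.symm⟩, rfl, rfl⟩
    · by_cases e2 : x = v ∨ G.Adj x v
      · left; right
        exact ⟨⟨by rcases e2 with h | h; exact Or.inl h; exact Or.inr ⟨h1, h.symm⟩, h1⟩, h2, h3⟩
      · by_cases e3 : s(x, y) ∈ F
        · right; exact ⟨h3.ne, e3⟩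
        · left; left; left
          tauto
  have := card_le_card hsub
  rw [hQ] at this
  have u1 := card_union_le (((goodSw p G F u v ∪
        (univ.filter fun x : V × V => x.1 ∈ ((insert u (nbc p G u (p v))).filter
          fun x => p x = p v) ∧ p x.2 = p u ∧ G.Adj x.1 x.2).image Prod.swap) ∪
        (univ.filter fun x : V × V => x.1 ∈ ((insert v (nbc p G v (p u))).filter
          fun x => p x = p u) ∧ p x.2 = p v ∧ G.Adj x.1 x.2)))
        (univ.filter fun x : V × V => x.1 ≠ x.2 ∧ s(x.1, x.2) ∈ F)
  have u2 := card_union_le ((goodSw p G F u v ∪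
        (univ.filter fun x : V × V => x.1 ∈ ((insert u (nbc p G u (p v))).filter
          fun x => p x = p v) ∧ p x.2 = p u ∧ G.Adj x.1 x.2).image Prod.swap))
        (univ.filter fun x : V × V => x.1 ∈ ((insert v (nbc p G v (p u))).filter
          fun x => p x = p u) ∧ p x.2 = p v ∧ G.Adj x.1 x.2)
  have u3 := card_union_le (goodSw p G F u v)
        ((univ.filter fun x : V × V => x.1 ∈ ((insert u (nbc p G u (p v))).filter
          fun x => p x = p v) ∧ p x.2 = p u ∧ G.Adj x.1 x.2).image Prod.swap)
  have u4 := card_image_le (s := (univ.filter fun x : V × V => x.1 ∈ ((insert u (nbc p G u (p v))).filter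
          fun x => p x = p v) ∧ p x.2 = p u ∧ G.Adj x.1 x.2)) (f := Prod.swap)
  rw [hQ1] at u4
  rw [hQ2] at u2
  have m1 := Nat.mul_le_mul_right A c1
  have m2 := Nat.mul_le_mul_right A c2
  nlinarith

omit [Fintype V] in
/-- Edges other than the two switched ones survive a switch. -/
lemma sw_pres (G : SimpleGraph V) {u v x y : V} {e : Sym2 V} (hE : e ∈ G.edgeSet)
    (d1 : e ≠ s(u, v)) (d2 : e ≠ s(x, y)) (h1 : ¬ G.Adj u y) (h3 : ¬ G.Adj x v) :
    e ∈ (flip G (swψ u x v y)).edgeSet := by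
  induction e using Sym2.inductionOn with
  | hf z w =>
    rw [SimpleGraph.mem_edgeSet] at hE ⊢
    have d3 : s(z, w) ≠ s(u, y) := fun h => by
      apply h1; rw [← SimpleGraph.mem_edgeSet, ← h]; exact hE
    have d4 : s(z, w) ≠ s(x, v) := fun h => by
      apply h3; rw [← SimpleGraph.mem_edgeSet, ← h]; exact hE
    rw [Ne, Sym2.eq_iff] at d1 d2 d3 d4
    rw [flip_adj]
    have key : ∀ z w : V, ¬ (z = u ∧ w = v) → ¬ (z = x ∧ w = y) → ¬ (z = u ∧ w = y) →
        ¬ (z = x ∧ w = v) → swψ u x v y z w = w := by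
      intro z w a1 a2 a3 a4
      unfold swψ
      split_ifs with hz
      · refine Equiv.swap_apply_of_ne_of_ne ?_ ?_
        · rintro rfl; rcases hz with rfl | rfl
          · exact a1 ⟨rfl, rfl⟩
          · exact a4 ⟨rfl, rfl⟩
        · rintro rfl; rcases hz with rfl | rfl
          · exact a3 ⟨rfl, rfl⟩
          · exact a2 ⟨rfl, rfl⟩
      · rfl
    rw [key z w (by tauto) (by tauto) (by tauto) (by tauto),
      key w z (by tauto) (by tauto) (by tauto) (by tauto)]
    exact hE

/-- Switching: adding one edge to the prescribed edges divides the number of graphs by a factor of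
order `n`. -/
lemma switch_count (p : V → Fin k) (a : Fin k → Fin k → ℕ) (hsym : ∀ i j, a i j = a j i) (n : ℕ)
    (hn : ∀ i, #(univ.filter fun v => p v = i) = n) (F : Finset (Sym2 V)) (u v : V)
    (he : s(u, v) ∉ F) (c : ℕ)
    (hc : c + 2 * (a (p u) (p v) * (a (p u) (p v) + 1)) + 2 * #F ≤ a (p u) (p v) * n) :
    #(GsF p a (insert s(u, v) F)) * c ≤ #(GsF p a F) * (a (p u) (p v)) ^ 2 := by
  set A := a (p u) (p v) with hA
  calc #(GsF p a (insert s(u, v) F)) * c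
      ≤ ∑ G ∈ GsF p a (insert s(u, v) F), #(goodSw p G F u v) := by
        rw [← smul_eq_mul]
        refine card_nsmul_le_sum _ _ _ fun G hG => ?_
        have hG' : Cmp p a G := by
          simp only [GsF, Gs, mem_filter] at hG; exact hG.1.2
        have := card_goodSw p a hsym n hn G hG' F u v
        rw [← hA] at this
        omega
    _ = #((GsF p a (insert s(u, v) F)).sigma fun G => goodSw p G F u v) := (card_sigma _ _).symm
    _ ≤ #((GsF p a F).sigma fun G => nbc p G v (p u) ×ˢ nbc p G u (p v)) := by
        refine card_le_card_of_injOn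
          (fun x => ⟨flip x.1 (swψ u x.2.1 v x.2.2), x.2⟩) ?_ ?_
        · rintro ⟨G, x, y⟩ h
          simp only [coe_sigma, Set.mem_sigma_iff, mem_coe, GsF, Gs, mem_filter, mem_univ,
            true_and, mem_insert, forall_eq_or_imp, goodSw] at h
          obtain ⟨⟨hG, huv, hF⟩, ⟨hx, hy, hxy⟩, ⟨h1, h2⟩, ⟨h3, h4⟩, h5⟩ := h
          rw [SimpleGraph.mem_edgeSet] at huv
          have n1 : u ≠ v := huv.ne
          have n2 : x ≠ y := hxy.ne
          have n3 : u ≠ x := by rintro rfl; exact h1 hxy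
          have n4 : v ≠ y := by rintro rfl; exact h1 huv
          simp only [coe_sigma, Set.mem_sigma_iff, mem_coe, GsF, Gs, mem_filter, mem_univ,
            true_and, mem_product, mem_nbc]
          refine ⟨⟨sw_cmp p a G hG hx hy huv hxy h1 h3 h2 h4, ?_⟩, ⟨hx, ?_⟩, ⟨hy, ?_⟩⟩
          · exact fun e hef => sw_pres G (hF e hef) (fun h => he (h ▸ hef)) (fun h => h5 (h ▸ hef)) h1 h3
          · rw [flip_adj]
            simp [swψ, n1.symm, h4.symm, hxy.symm]
          · rw [flip_adj]
            simp [swψ, h2, n2.symm, huv]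
        · rintro ⟨G, x, y⟩ h ⟨G', x', y'⟩ h' heq
          simp only [Sigma.mk.injEq] at heq
          obtain ⟨e1, e2⟩ := heq
          have e2 := eq_of_heq e2
          simp only [Prod.mk.injEq] at e2
          obtain ⟨rfl, rfl⟩ := e2
          simp only [coe_sigma, Set.mem_sigma_iff, mem_coe, GsF, Gs, mem_filter, mem_univ,
            true_and, mem_insert, forall_eq_or_imp, goodSw] at h
          obtain ⟨⟨hG, huv, hF⟩, ⟨hx, hy, hxy⟩, ⟨h1, h2⟩, ⟨h3, h4⟩, h5⟩ := h
          rw [SimpleGraph.mem_edgeSet] at huv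
          have q1 := swψ_props G huv.ne hxy.ne h2 h4
          have q2 := swψ_props G' huv.ne hxy.ne h2 h4
          rw [← q1, ← q2]
          rw [e1]
    _ = #(GsF p a F) * A ^ 2 := by
        rw [card_sigma, ← smul_eq_mul]
        refine sum_eq_card_nsmul fun G hG => ?_
        have hG' : Cmp p a G := by
          simp only [GsF, Gs, mem_filter] at hG; exact hG.1.2
        rw [card_product, hG', hG', hsym (p v), ← hA, sq]

/-- The fraction of the graphs compatible with `p` that contain a given set `F` of edges is at most
`(2 D / n) ^ |F|`, by adding the edges one at a time. -/
lemma contain_bound (p : V → Fin k) (a : Fin k → Fin k → ℕ) (hsym : ∀ i j, a i j = a j i) (n D : ℕ)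
    (hn : ∀ i, #(univ.filter fun v => p v = i) = n) (hpos : ∀ i j, 0 < a i j)
    (hD : 8 * (D + 1) ≤ n) (F : Finset (Sym2 V))
    (hF : ∀ u v, s(u, v) ∈ F → a (p u) (p v) ≤ D) (hFc : 8 * #F ≤ n) :
    #(GsF p a F) * n ^ #F ≤ #(Gs p a) * (2 * D) ^ #F := by
  induction F using Finset.induction_on with
  | empty => simp [GsF]
  | insert e F he ih =>
    rw [card_insert_of_notMem he] at hFc ⊢
    have ih := ih (fun u v h => hF u v (mem_insert_of_mem h)) (by omega)
    induction e using Sym2.inductionOn with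
    | hf u v =>
      set A := a (p u) (p v) with hA
      have hAD : A ≤ D := hF u v (mem_insert_self _ _)
      have hA0 : 0 < A := hpos _ _
      have h1 := switch_count p a hsym n hn F u v he (A * n - 2 * (A * (A + 1)) - 2 * #F)
      have b1 : 8 * (A * (A + 1)) ≤ A * n := by
        have : 8 * (A + 1) ≤ n := by omega
        nlinarith
      have b2 : 8 * #F ≤ A * n := by nlinarith
      have h1 := h1 (by rw [← hA]; omega)
      rw [← hA] at h1
      have h2 : #(GsF p a (insert s(u, v) F)) * (A * n) ≤ 2 * (#(GsF p a F) * A ^ 2) := by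
        refine le_trans ?_ (Nat.mul_le_mul_left 2 h1)
        have : A * n ≤ 2 * (A * n - 2 * (A * (A + 1)) - 2 * #F) := by omega
        calc _ ≤ #(GsF p a (insert s(u, v) F)) * (2 * (A * n - 2 * (A * (A + 1)) - 2 * #F)) :=
              Nat.mul_le_mul_left _ this
          _ = _ := by ring
      have h3 : #(GsF p a (insert s(u, v) F)) * n ≤ 2 * (#(GsF p a F) * A) := by
        refine Nat.le_of_mul_le_mul_left ?_ hA0
        calc A * (#(GsF p a (insert s(u, v) F)) * n)
            = #(GsF p a (insert s(u, v) F)) * (A * n) := by ring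
          _ ≤ _ := h2
          _ = _ := by ring
      calc #(GsF p a (insert s(u, v) F)) * n ^ (#F + 1)
          = (#(GsF p a (insert s(u, v) F)) * n) * n ^ #F := by ring
        _ ≤ (2 * (#(GsF p a F) * A)) * n ^ #F := Nat.mul_le_mul_right _ h3
        _ ≤ (2 * (#(GsF p a F) * D)) * n ^ #F := by gcongr
        _ = (2 * D) * (#(GsF p a F) * n ^ #F) := by ring
        _ ≤ (2 * D) * (#(Gs p a) * (2 * D) ^ #F) := Nat.mul_le_mul_left _ ih
        _ = _ := by ring

end RSBM

/-! ### Numerical estimates for the union bound over small sets -/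

namespace RSBM
open Finset
open scoped Classical

/-- The expansion constant `L`: expansion is claimed for the sets `Y` with `L * (D * |Y|) ≤ n`. Its
size makes each term of the union bound `exp_numeric` a small power of `D |Y| / n`. -/
noncomputable def expL (k : ℕ) : ℕ := ⌈Real.exp (40 * (2 * k + 11))⌉₊

lemma expL_ge (k : ℕ) : Real.exp (40 * (2 * k + 11)) ≤ expL k := Nat.le_ceil _

lemma expL_large (k : ℕ) : 16 ≤ expL k := by
  have h1 := Real.add_one_le_exp (40 * (2 * (k : ℝ) + 11))
  have h2 := expL_ge k
  have : (16 : ℝ) ≤ expL k := by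
    have : (0 : ℝ) ≤ k := k.cast_nonneg
    linarith
  exact_mod_cast this

/-- The free parameter `z` trades the power of `n / z` against the exponential factor. -/
lemma choose_le_exp (k n m : ℕ) (z : ℝ) (hz : 0 < z) (hn : (0 : ℝ) < n) :
    ((k * n).choose m : ℝ) ≤ (n / z) ^ m * Real.exp (k * z) := by
  have h1 : ((k * n).choose m : ℝ) ≤ ((k * n : ℕ) : ℝ) ^ m / m.factorial :=
    Nat.choose_le_pow_div m (k * n)
  have h2 := Real.pow_div_factorial_le_exp (k * z) (by positivity) m
  calc _ ≤ _ := h1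
    _ = (n / z) ^ m * ((k * z) ^ m / m.factorial) := by
        rw [← mul_div_assoc, ← mul_pow]
        congr 2
        push_cast
        field_simp
    _ ≤ _ := by gcongr

/-- One term of the union bound for expansion: the number of choices of `Y`, `W` and `F` of sizes `y`,
`w` and `f`, times the bound on the fraction of graphs containing `F`, times the factor
`2 ^ (y + 1 + (w + 1) + (f + 1))` that makes the sum over all sizes converge. As `f` exceeds
`y + w`, every surplus edge contributes a factor `D y / n`. -/
lemma exp_numeric (k n D y w f : ℕ) (hD : 40 ≤ D) (hy : 1 ≤ y) (hw : w ≤ D * y) (hf : f ≤ D * y)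
    (h : D * y + 20 * w < 20 * f) (hL : Real.exp (40 * (2 * k + 11)) * (D * y : ℕ) ≤ n) :
    ((k * n).choose y : ℝ) * (k * n).choose w * (y * (y + w)).choose f * (2 * D / n) ^ f *
      2 ^ (y + 1 + (w + 1) + (f + 1)) ≤ Real.exp (40 * (2 * k + 11)) / n := by
  set E := Real.exp (40 * (2 * k + 11)) with hE
  obtain ⟨z, hz⟩ : ∃ z, z = D * y := ⟨_, rfl⟩
  rw [← hz] at hw hf h hL
  have hyz : 40 * y ≤ z := by rw [hz]; exact Nat.mul_le_mul_right _ hD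
  have hz0 : (0 : ℝ) < z := by
    have : 0 < z := by omega
    exact_mod_cast this
  have hE1 : 1 ≤ E := by
    rw [hE]; apply Real.one_le_exp; positivity
  have hn0 : (0 : ℝ) < n := by nlinarith
  obtain ⟨m, hm⟩ : ∃ m, f = y + w + (m + 1) := ⟨f - (y + w) - 1, by omega⟩
  have hzm : z ≤ 40 * (m + 1) := by omega
  set r : ℝ := z / n with hr
  have hr0 : 0 < r := by positivity
  have hEr : E * r ≤ 1 := by
    rw [hr, ← mul_div_assoc, div_le_one hn0]; exact hL
  have a1 := choose_le_exp k n y z hz0 hn0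
  have a2 := choose_le_exp k n w z hz0 hn0
  have hinv : (n : ℝ) / z = r⁻¹ := by rw [hr, inv_div]
  rw [hinv] at a1 a2
  have a3 : ((y * (y + w)).choose f : ℝ) * (2 * D / n) ^ f ≤ r ^ f * Real.exp (4 * z) := by
    have h1 : ((y * (y + w)).choose f : ℝ) ≤ ((y * (y + w) : ℕ) : ℝ) ^ f / f.factorial :=
      Nat.choose_le_pow_div f _
    have h2 := Real.pow_div_factorial_le_exp (4 * z) (by positivity) f
    have h3 : ((y * (y + w) : ℕ) : ℝ) ≤ y * (2 * z) := by
      have : y * (y + w) ≤ y * (2 * z) := Nat.mul_le_mul_left _ (by omega)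
      exact_mod_cast this
    calc _ ≤ ((y * (2 * z) : ℝ) ^ f / f.factorial) * (2 * D / n) ^ f := by
          gcongr
          exact h1.trans (by gcongr)
      _ = r ^ f * ((4 * z) ^ f / f.factorial) := by
          rw [div_mul_eq_mul_div, ← mul_pow, ← mul_div_assoc (r ^ f), ← mul_pow]
          congr 2
          rw [hr, hz]; push_cast; field_simp; ring
      _ ≤ _ := by gcongr
  have a4 : (2 : ℝ) ^ (y + 1 + (w + 1) + (f + 1)) ≤ Real.exp (6 * z) := by
    have h1 : (2 : ℝ) ≤ Real.exp 1 := by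
      have := Real.add_one_le_exp (1 : ℝ); linarith
    calc (2 : ℝ) ^ (y + 1 + (w + 1) + (f + 1)) ≤ 2 ^ (6 * z) :=
          pow_le_pow_right₀ (by norm_num) (by omega)
      _ ≤ (Real.exp 1) ^ (6 * z) := by gcongr
      _ = _ := by rw [← Real.exp_nat_mul]; congr 1; push_cast; ring
  have a5 : r * n ≤ Real.exp z := by
    rw [hr, div_mul_cancel₀ _ hn0.ne']
    have := Real.add_one_le_exp (z : ℝ); linarith
  rw [le_div_iff₀ hn0]
  calc ((k * n).choose y : ℝ) * (k * n).choose w * (y * (y + w)).choose f * (2 * D / n) ^ f *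
      2 ^ (y + 1 + (w + 1) + (f + 1)) * n
      = ((k * n).choose y : ℝ) * (k * n).choose w * ((y * (y + w)).choose f * (2 * D / n) ^ f) *
      2 ^ (y + 1 + (w + 1) + (f + 1)) * n := by ring
    _ ≤ (r⁻¹ ^ y * Real.exp (k * z)) * (r⁻¹ ^ w * Real.exp (k * z)) * (r ^ f * Real.exp (4 * z)) *
        Real.exp (6 * z) * n := by gcongr
    _ = (r⁻¹ ^ y * r ^ y) * (r⁻¹ ^ w * r ^ w) * r ^ m * (r * n) * (Real.exp (k * z) *
        Real.exp (k * z) * Real.exp (4 * z) * Real.exp (6 * z)) := by rw [hm]; ring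
    _ = r ^ m * (r * n) * (Real.exp (k * z) *
        Real.exp (k * z) * Real.exp (4 * z) * Real.exp (6 * z)) := by
        rw [← mul_pow, ← mul_pow, inv_mul_cancel₀ hr0.ne']; simp
    _ ≤ r ^ m * Real.exp z * (Real.exp (k * z) *
        Real.exp (k * z) * Real.exp (4 * z) * Real.exp (6 * z)) := by gcongr
    _ = r ^ m * Real.exp ((2 * k + 11) * z) := by
        rw [mul_assoc]; simp only [← Real.exp_add]; congr 2; ring
    _ ≤ r ^ m * Real.exp ((2 * k + 11) * (40 * (m + 1) : ℕ)) := by gcongr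
    _ = r ^ m * E ^ (m + 1) := by
        rw [hE, ← Real.exp_nat_mul]; congr 2; push_cast; ring
    _ = E * (E * r) ^ m := by ring
    _ ≤ E * 1 := by
        gcongr; exact pow_le_one₀ (by positivity) hEr
    _ = E := mul_one _

/-- The weight of an `m`-element subset of an `N`-element set. The weights of all subsets add up to at
most `1`, so a bound by a constant times the weight can be summed over the subsets. -/
noncomputable def wt (N m : ℕ) : ℝ := (1 / 2) ^ (m + 1) / N.choose m

lemma wt_nonneg (N m : ℕ) : 0 ≤ wt N m := by unfold wt; positivity

lemma sum_wt {α : Type} (S : Finset α) : ∑ F ∈ S.powerset, wt #S #F ≤ 1 := by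
  rw [sum_powerset_apply_card (fun m => wt #S m)]
  have : ∀ m : ℕ, ∑ i ∈ range m, (1 / 2 : ℝ) ^ (i + 1) = 1 - (1 / 2) ^ m := by
    intro m
    induction m with
    | zero => simp
    | succ m ih => rw [sum_range_succ, ih]; ring
  calc _ ≤ ∑ i ∈ range (#S + 1), (1 / 2 : ℝ) ^ (i + 1) := by
        refine sum_le_sum fun i hi => ?_
        unfold wt
        have : (0 : ℝ) < (#S).choose i := by
          have := Nat.choose_pos (Nat.lt_succ_iff.1 (mem_range.1 hi))
          exact_mod_cast this
        rw [nsmul_eq_mul, mul_div_cancel₀ _ this.ne']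
    _ ≤ 1 := by
        rw [this]
        have : (0 : ℝ) ≤ (1 / 2) ^ (#S + 1) := by positivity
        linarith

end RSBM

/-! ### Unique-neighbour expansion -/

namespace RSBM
open Finset
open scoped Classical

variable {V : Type} [Fintype V] {k : ℕ}

/-- The vertices outside `Y` joined to exactly one vertex of `Y` by an edge of `G` of type `E`. -/
noncomputable def Uniq (E : V → V → Prop) (G : SimpleGraph V) (Y : Finset V) : Finset V :=
  univ.filter fun u => u ∉ Y ∧ #(Y.filter fun v => E v u ∧ G.Adj v u) = 1

/-- Unique-neighbour expansion of the small subsets of `dom` along the edges of type `E`, where `D` is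
meant to be the number of edges of type `E` at each vertex of `dom`: every nonempty `Y ⊆ dom` with
`L * (D * |Y|) ≤ n` has at least `9/10 * D * |Y|` unique neighbours. -/
def Expand (E : V → V → Prop) (dom : Finset V) (D L n : ℕ) (G : SimpleGraph V) : Prop :=
  ∀ Y ⊆ dom, Y.Nonempty → L * (D * #Y) ≤ n → 9 * (D * #Y) ≤ 10 * #(Uniq E G Y)

/-- The pairs of type `E` with one end in `Y` and the other in `Y ∪ W`. -/
noncomputable def cand (E : V → V → Prop) (Y W : Finset V) : Finset (Sym2 V) :=
  ((Y ×ˢ (Y ∪ W)).filter fun x => E x.1 x.2).image fun x => s(x.1, x.2)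

omit [Fintype V] in
lemma card_cand (E : V → V → Prop) (Y W : Finset V) : #(cand E Y W) ≤ #Y * (#Y + #W) := by
  refine card_image_le.trans ((card_filter_le _ _).trans ?_)
  rw [card_product]
  exact Nat.mul_le_mul_left _ (card_union_le _ _)

/-- If `Y` has too few unique neighbours, many edges meet `Y` in few vertices: there are a set `W`,
consisting of the other neighbours of `Y`, and a set `F` of edges of `G` from `Y` to `Y ∪ W` with
`20 |F| > D |Y| + 20 |W|`. -/
lemma expand_fail (E : V → V → Prop) (G : SimpleGraph V) (Y : Finset V) (D : ℕ)
    (hD : ∀ v ∈ Y, #(univ.filter fun u => E v u ∧ G.Adj v u) = D)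
    (hU : 10 * #(Uniq E G Y) < 9 * (D * #Y)) :
    ∃ W : Finset V, ∃ F ⊆ cand E Y W, (∀ e ∈ F, e ∈ G.edgeSet) ∧ #W ≤ D * #Y ∧ #F ≤ D * #Y ∧
      D * #Y + 20 * #W < 20 * #F := by
  set P : Finset (V × V) := univ.filter fun x => x.1 ∈ Y ∧ E x.1 x.2 ∧ G.Adj x.1 x.2 with hP
  have cP : #P = D * #Y := by
    have : P = Y.biUnion fun v => (univ.filter fun u => E v u ∧ G.Adj v u).image fun u => (v, u) := by
      ext ⟨x, y⟩
      simp only [hP, mem_filter, mem_univ, true_and, mem_biUnion, mem_image, Prod.mk.injEq]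
      constructor
      · rintro ⟨h1, h2⟩; exact ⟨x, h1, y, h2, rfl, rfl⟩
      · rintro ⟨_, h1, _, h2, rfl, rfl⟩; exact ⟨h1, h2⟩
    rw [this, card_biUnion]
    · rw [sum_congr rfl (fun x _ => card_image_of_injective _ (Prod.mk_right_injective x)),
        sum_congr rfl hD, sum_const, smul_eq_mul, mul_comm]
    · intro x _ y _ hxy
      simp only [Function.onFun]
      rw [disjoint_left]
      rintro ⟨z, w⟩ h1 h2
      simp only [mem_image, Prod.mk.injEq] at h1 h2
      obtain ⟨_, _, h1, _⟩ := h1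
      obtain ⟨_, _, h2, _⟩ := h2
      exact hxy (h1.trans h2.symm)
  set P1 := P.filter fun x => x.2 ∉ Y with hP1
  set P0 := P.filter fun x => x.2 ∈ Y with hP0
  have c01 : #P0 + #P1 = #P := card_filter_add_card_filter_not (s := P) (fun x => x.2 ∈ Y)
  set W := P1.image Prod.snd with hW
  set F := P.image fun x => s(x.1, x.2) with hF
  refine ⟨W, F, ?_, ?_, ?_, ?_, ?_⟩
  · intro e he
    simp only [hF, mem_image] at he
    obtain ⟨x, hx, rfl⟩ := he
    refine mem_image_of_mem _ ?_
    have hx' := hx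
    simp only [hP, mem_filter, mem_univ, true_and] at hx
    refine mem_filter.2 ⟨mem_product.2 ⟨hx.1, ?_⟩, hx.2.1⟩
    by_cases h : x.2 ∈ Y
    · exact mem_union_left _ h
    · exact mem_union_right _ (mem_image_of_mem _ (mem_filter.2 ⟨hx', h⟩))
  · intro e he
    simp only [hF, mem_image] at he
    obtain ⟨x, hx, rfl⟩ := he
    simp only [hP, mem_filter, mem_univ, true_and] at hx
    exact hx.2.2
  · rw [← cP]; exact card_image_le.trans (card_filter_le _ _)
  · rw [← cP]; exact card_image_le
  · -- the pairs inside `Y` are counted at most twice, the others once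
    have f1 : #(P1.image fun x => s(x.1, x.2)) = #P1 := by
      refine card_image_of_injOn ?_
      rintro ⟨x, y⟩ h ⟨z, w⟩ h' he
      simp only [hP1, hP, coe_filter, Set.mem_ofPred_eq, mem_filter, mem_univ, true_and] at h h'
      rcases Sym2.eq_iff.1 he with ⟨rfl, rfl⟩ | ⟨rfl, rfl⟩
      · rfl
      · exact absurd h'.1.1 h.2
    have f0 : #P0 ≤ 2 * #(P0.image fun x => s(x.1, x.2)) := by
      refine card_le_mul_card_image _ 2 ?_
      intro e _
      induction e using Sym2.inductionOn with
      | hf x y =>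
        refine (card_le_card (t := {(x, y), (y, x)}) ?_).trans card_le_two
        rintro ⟨z, w⟩ h
        simp only [mem_filter, Sym2.eq_iff] at h
        simp only [mem_insert, mem_singleton, Prod.mk.injEq]
        exact h.2
    have f2 : #(P0.image fun x => s(x.1, x.2)) + #(P1.image fun x => s(x.1, x.2)) ≤ #F := by
      rw [← card_union_of_disjoint]
      · refine card_le_card (union_subset (image_subset_image (filter_subset _ _))
          (image_subset_image (filter_subset _ _)))
      · rw [disjoint_left]
        intro e h h'
        obtain ⟨⟨x, y⟩, hx, rfl⟩ := mem_image.1 h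
        obtain ⟨⟨z, w⟩, hz, he⟩ := mem_image.1 h'
        simp only [hP1, hP0, hP, mem_filter, mem_univ, true_and] at hx hz
        rcases Sym2.eq_iff.1 he with ⟨rfl, rfl⟩ | ⟨rfl, rfl⟩
        · exact hz.2 hx.2
        · exact hz.2 hx.1.1
    have fw : 2 * #W ≤ #P1 + #(Uniq E G Y) := by
      have e1 : #P1 = ∑ u ∈ W, #(P1.filter fun x => x.2 = u) :=
        card_eq_sum_card_fiberwise fun x hx => mem_image_of_mem _ hx
      have e2 : #(W.filter fun u => u ∈ Uniq E G Y) ≤ #(Uniq E G Y) :=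
        card_le_card fun u hu => (mem_filter.1 hu).2
      rw [card_filter] at e2
      have e3 : ∑ u ∈ W, 2 ≤ ∑ u ∈ W, (#(P1.filter fun x => x.2 = u) +
          if u ∈ Uniq E G Y then 1 else 0) := by
        refine sum_le_sum fun u hu => ?_
        have hc : #(P1.filter fun x => x.2 = u) = #(Y.filter fun v => E v u ∧ G.Adj v u) := by
          obtain ⟨x, hx, rfl⟩ := mem_image.1 hu
          have hx2 := (mem_filter.1 hx).2
          refine card_bij (fun z _ => z.1) ?_ ?_ ?_
          · rintro ⟨z, w⟩ hz
            simp only [hP1, hP, mem_filter, mem_univ, true_and] at hz ⊢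
            obtain ⟨⟨⟨h1, h2⟩, h3⟩, rfl⟩ := hz
            exact ⟨h1, h2⟩
          · rintro ⟨z, w⟩ hz ⟨z', w'⟩ hz' h
            rw [Prod.mk.injEq]
            exact ⟨h, ((mem_filter.1 hz).2).trans ((mem_filter.1 hz').2).symm⟩
          · intro z hz
            simp only [mem_filter] at hz
            refine ⟨(z, x.2), ?_, rfl⟩
            simp only [hP1, hP, mem_filter, mem_univ, true_and]
            exact ⟨⟨hz, hx2⟩, trivial⟩
        have hpos : 0 < #(P1.filter fun x => x.2 = u) := by
          obtain ⟨x, hx, rfl⟩ := mem_image.1 hu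
          exact card_pos.2 ⟨x, mem_filter.2 ⟨hx, rfl⟩⟩
        by_cases h1 : #(P1.filter fun x => x.2 = u) = 1
        · have : u ∈ Uniq E G Y := by
            obtain ⟨x, hx, rfl⟩ := mem_image.1 hu
            exact mem_filter.2 ⟨mem_univ _, (mem_filter.1 hx).2, hc ▸ h1⟩
          rw [if_pos this]; omega
        · omega
      rw [sum_const, smul_eq_mul, sum_add_distrib, ← e1] at e3
      omega
    omega

/-- All but a fraction `O(1/n)` of the graphs compatible with `p` have unique-neighbour expansion: sum
`contain_bound` over the triples `Y`, `W`, `F` provided by `expand_fail`. -/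
lemma expand_count (p : V → Fin k) (a : Fin k → Fin k → ℕ) (hsym : ∀ i j, a i j = a j i) (n D : ℕ)
    (hn : ∀ i, #(univ.filter fun v => p v = i) = n) (hpos : ∀ i j, 0 < a i j)
    (E : V → V → Prop) (hE : ∀ u v, E u v → a (p u) (p v) ≤ D) (hE' : ∀ u v, E u v → E v u)
    (dom : Finset V) (hD : ∀ G, Cmp p a G → ∀ v ∈ dom, #(univ.filter fun u => E v u ∧ G.Adj v u) = D)
    (hD40 : 40 ≤ D) :
    (#((Gs p a).filter fun G => ¬ Expand E dom D (expL k) n G) : ℝ) ≤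
      #(Gs p a) * (Real.exp (40 * (2 * k + 11)) / n) := by
  have hV : Fintype.card V = k * n := by
    rw [← card_univ, card_eq_sum_card_fiberwise (f := p) (t := univ) (fun _ _ => mem_univ _)]
    simp [hn]
  set cond : Finset V → Finset V → Finset (Sym2 V) → Prop := fun Y W F =>
    1 ≤ #Y ∧ expL k * (D * #Y) ≤ n ∧ #W ≤ D * #Y ∧ #F ≤ D * #Y ∧ D * #Y + 20 * #W < 20 * #F
    with hcond
  have hsub : ((Gs p a).filter fun G => ¬ Expand E dom D (expL k) n G) ⊆
      univ.biUnion fun Y : Finset V => univ.biUnion fun W : Finset V =>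
        (((cand E Y W).powerset.filter fun F => cond Y W F).biUnion fun F => GsF p a F) := by
    intro G hG
    obtain ⟨hG, hx⟩ := mem_filter.1 hG
    unfold Expand at hx
    push Not at hx
    obtain ⟨Y, hY, hYn, hL, hU⟩ := hx
    have hc : Cmp p a G := (mem_filter.1 hG).2
    obtain ⟨W, F, hF, hFG, h1, h2, h3⟩ := expand_fail E G Y D (fun v hv => hD G hc v (hY hv)) hU
    refine mem_biUnion.2 ⟨Y, mem_univ _, mem_biUnion.2 ⟨W, mem_univ _, mem_biUnion.2 ⟨F, ?_, ?_⟩⟩⟩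
    · exact mem_filter.2 ⟨mem_powerset.2 hF, card_pos.2 hYn, hL, h1, h2, h3⟩
    · exact mem_filter.2 ⟨hG, hFG⟩
  have key : ∀ Y W : Finset V, ∀ F ∈ (cand E Y W).powerset.filter fun F => cond Y W F,
      (#(GsF p a F) : ℝ) ≤ #(Gs p a) * (Real.exp (40 * (2 * k + 11)) / n) *
        (wt #(univ : Finset V) #Y * (wt #(univ : Finset V) #W * wt #(cand E Y W) #F)) := by
    intro Y W F hF
    obtain ⟨hF, hy, hL, h1, h2, h3⟩ := mem_filter.1 hF
    rw [mem_powerset] at hF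
    have hL16 := expL_large k
    have hn0 : 0 < n := by
      have : 0 < expL k * (D * #Y) := by positivity
      omega
    have hDy : D ≤ D * #Y := Nat.le_mul_of_pos_right _ hy
    have hLn : 16 * (D * #Y) ≤ n := (Nat.mul_le_mul_right _ hL16).trans hL
    have b := contain_bound p a hsym n D hn hpos (by omega) F ?_ (by omega)
    swap
    · intro u v huv
      have := hF huv
      simp only [cand, mem_image, mem_filter] at this
      obtain ⟨x, ⟨_, hx⟩, he⟩ := this
      rcases Sym2.eq_iff.1 he with ⟨rfl, rfl⟩ | ⟨rfl, rfl⟩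
      · exact hE _ _ hx
      · exact hE _ _ (hE' _ _ hx)
    have b' : (#(GsF p a F) : ℝ) * n ^ #F ≤ #(Gs p a) * (2 * D) ^ #F := by exact_mod_cast b
    have hn0' : (0 : ℝ) < n := by exact_mod_cast hn0
    have b2 : (#(GsF p a F) : ℝ) ≤ #(Gs p a) * (2 * D / n) ^ #F := by
      rw [div_pow, ← mul_div_assoc, le_div_iff₀ (by positivity)]; exact b'
    have num := exp_numeric k n D #Y #W #F hD40 hy h1 h2 h3
      ((mul_le_mul_of_nonneg_right (expL_ge k) (by positivity)).trans (by exact_mod_cast hL))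
    refine b2.trans ?_
    rw [mul_assoc]
    refine mul_le_mul_of_nonneg_left ?_ (by positivity)
    rw [card_univ, hV]
    have hYN : #Y ≤ k * n := by rw [← hV]; exact card_le_univ _
    have hWN : #W ≤ k * n := by rw [← hV]; exact card_le_univ _
    have p1 : (0 : ℝ) < (k * n).choose #Y := by exact_mod_cast Nat.choose_pos hYN
    have p2 : (0 : ℝ) < (k * n).choose #W := by exact_mod_cast Nat.choose_pos hWN
    have p3 : (0 : ℝ) < (#(cand E Y W)).choose #F := by
      exact_mod_cast Nat.choose_pos (card_le_card hF)
    have p4 : ((#(cand E Y W)).choose #F : ℝ) ≤ (#Y * (#Y + #W)).choose #F := by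
      exact_mod_cast Nat.choose_le_choose _ (card_cand E Y W)
    unfold wt
    rw [div_mul_div_comm, div_mul_div_comm, ← mul_div_assoc, le_div_iff₀ (by positivity),
      ← pow_add, ← pow_add, one_div, inv_pow, ← div_eq_mul_inv, le_div_iff₀ (by positivity)]
    refine le_trans (le_of_eq ?_) ((mul_le_mul_of_nonneg_right (mul_le_mul_of_nonneg_right
      (mul_le_mul_of_nonneg_left p4 (by positivity)) (by positivity)) (by positivity)).trans num)
    ring
  set K : ℝ := #(Gs p a) * (Real.exp (40 * (2 * k + 11)) / n) with hK
  have hK0 : 0 ≤ K := by positivity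
  calc (#((Gs p a).filter fun G => ¬ Expand E dom D (expL k) n G) : ℝ)
      ≤ ∑ Y : Finset V, ∑ W : Finset V, ∑ F ∈ (cand E Y W).powerset.filter fun F => cond Y W F,
        (#(GsF p a F) : ℝ) := by
        have : #((Gs p a).filter fun G => ¬ Expand E dom D (expL k) n G) ≤
          ∑ Y : Finset V, ∑ W : Finset V, ∑ F ∈ (cand E Y W).powerset.filter fun F => cond Y W F,
          #(GsF p a F) :=
          (card_le_card hsub).trans (card_biUnion_le.trans (sum_le_sum fun Y _ =>
            card_biUnion_le.trans (sum_le_sum fun W _ => card_biUnion_le)))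
        exact_mod_cast this
    _ ≤ ∑ Y : Finset V, ∑ W : Finset V, ∑ F ∈ (cand E Y W).powerset,
        K * (wt #(univ : Finset V) #Y * (wt #(univ : Finset V) #W * wt #(cand E Y W) #F)) := by
        refine sum_le_sum fun Y _ => sum_le_sum fun W _ => (sum_le_sum (key Y W)).trans ?_
        refine sum_le_sum_of_subset_of_nonneg (filter_subset _ _) fun F _ _ => ?_
        have := wt_nonneg #(univ : Finset V) #Y
        have := wt_nonneg #(univ : Finset V) #W
        have := wt_nonneg #(cand E Y W) #F
        positivity
    _ = K * ∑ Y : Finset V, wt #(univ : Finset V) #Y * ∑ W : Finset V, wt #(univ : Finset V) #W *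
          ∑ F ∈ (cand E Y W).powerset, wt #(cand E Y W) #F := by
        simp only [mul_sum]
    _ ≤ K * ∑ Y : Finset V, wt #(univ : Finset V) #Y * ∑ W : Finset V, wt #(univ : Finset V) #W *
          1 := by
        gcongr with Y _ W _
        · exact wt_nonneg _ _
        · exact wt_nonneg _ _
        · exact sum_wt _
    _ ≤ K * 1 := by
        have hw := sum_wt (univ : Finset V)
        rw [powerset_univ] at hw
        gcongr
        simp only [mul_one]
        refine le_trans (sum_le_sum fun Y _ => mul_le_mul_of_nonneg_left hw (wt_nonneg _ _)) ?_
        simpa using hw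
    _ = K := mul_one _

end RSBM

/-! ### Pairs of vertices and the upper bound on rewiring classes -/

namespace RSBM
open Finset
open scoped Classical

variable {V : Type} [Fintype V] {k : ℕ} {ι : Type} [Fintype ι]

/-- `u ∈ X` is joined to exactly one of the two vertices of the pair `t`. -/
def isL (e : ι × Bool ↪ V) (X : Finset V) (G : SimpleGraph V) (t : ι) (u : V) : Prop :=
  u ∈ X ∧ (G.Adj (e (t, true)) u ↔ ¬ G.Adj (e (t, false)) u)

/-- The vertices of cluster `i` joined to exactly one vertex of the pair `t`. -/
noncomputable def LamT (e : ι × Bool ↪ V) (X : Finset V) (p : V → Fin k) (G : SimpleGraph V)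
    (t : ι) (i : Fin k) : Finset V := univ.filter fun u => p u = i ∧ isL e X G t u

/-- The pairs of which `u` sees exactly one vertex. -/
noncomputable def LamU (e : ι × Bool ↪ V) (X : Finset V) (G : SimpleGraph V)
    (u : V) : Finset ι := univ.filter fun t => isL e X G t u

/-- The number of vertices of cluster `i` joined to the vertex `(t, true)` of the pair `t` only. -/
noncomputable def hT (e : ι × Bool ↪ V) (X : Finset V) (p : V → Fin k) (G : SimpleGraph V)
    (t : ι) (i : Fin k) : ℕ := #((LamT e X p G t i).filter fun u => G.Adj (e (t, true)) u)

/-- Exchange the two vertices of every pair `t` with `Z t`. -/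
noncomputable def pairPerm (e : ι × Bool ↪ V) (Z : ι → Prop) : Equiv.Perm V :=
  (Function.Involutive.toPerm (fun x : ι × Bool => (x.1, if Z x.1 then !x.2 else x.2))
    (by rintro ⟨t, s⟩; by_cases h : Z t <;> simp [h])).viaEmbedding e

omit [Fintype V] [Fintype ι] in
lemma pairPerm_apply (e : ι × Bool ↪ V) (Z : ι → Prop) (t : ι) (s : Bool) :
    pairPerm e Z (e (t, s)) = e (t, if Z t then !s else s) := by
  unfold pairPerm
  rw [Equiv.Perm.viaEmbedding_apply]; rfl

omit [Fintype V] [Fintype ι] in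
lemma pairPerm_notMem (e : ι × Bool ↪ V) (Z : ι → Prop) (u : V) (h : u ∉ Set.range e) :
    pairPerm e Z u = u := by
  unfold pairPerm
  rw [Equiv.Perm.viaEmbedding_apply_of_notMem _ _ _ h]

omit [Fintype V] [Fintype ι] in
lemma pairPerm_false (e : ι × Bool ↪ V) (Z : ι → Prop) (h : ∀ t, ¬ Z t) :
    pairPerm e Z = 1 := by
  ext u
  by_cases hu : u ∈ Set.range e
  · obtain ⟨⟨t, s⟩, rfl⟩ := hu
    rw [pairPerm_apply, if_neg (h t)]; rfl
  · rw [pairPerm_notMem _ _ _ hu]; rfl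

/-- The part of `G` that is left unchanged by rewiring: which pairs have both ends, and which have at
least one end, joined to each `u ∈ X`, together with all adjacencies that are not between the pairs
and `X`. The fibres of `skel` are the rewiring classes. -/
noncomputable def skel (e : ι × Bool ↪ V) (X : Finset V) (G : SimpleGraph V) :
    (ι → V → Prop) × (ι → V → Prop) × (V → V → Prop) :=
  (fun t u => u ∈ X ∧ G.Adj (e (t, true)) u ∧ G.Adj (e (t, false)) u,
   fun t u => u ∈ X ∧ (G.Adj (e (t, true)) u ∨ G.Adj (e (t, false)) u),
   fun v w => ¬ (v ∈ Set.range e ∧ w ∈ X) ∧ ¬ (w ∈ Set.range e ∧ v ∈ X) ∧ G.Adj v w)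

omit [Fintype V] [Fintype ι] in
lemma skel_eq_iff (e : ι × Bool ↪ V) (X : Finset V) (G G' : SimpleGraph V) :
    skel e X G = skel e X G' ↔
      (∀ t, ∀ u ∈ X, (G.Adj (e (t, true)) u ∧ G.Adj (e (t, false)) u ↔
          G'.Adj (e (t, true)) u ∧ G'.Adj (e (t, false)) u) ∧
        (G.Adj (e (t, true)) u ∨ G.Adj (e (t, false)) u ↔
          G'.Adj (e (t, true)) u ∨ G'.Adj (e (t, false)) u)) ∧
      ∀ v w, ¬ (v ∈ Set.range e ∧ w ∈ X) → ¬ (w ∈ Set.range e ∧ v ∈ X) →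
        (G.Adj v w ↔ G'.Adj v w) := by
  unfold skel
  simp only [Prod.mk.injEq, funext_iff, eq_iff_iff, and_congr_right_iff]
  constructor
  · rintro ⟨h1, h2, h3⟩
    exact ⟨fun t u hu => ⟨h1 t u hu, h2 t u hu⟩, h3⟩
  · rintro ⟨h1, h3⟩
    exact ⟨fun t u hu => (h1 t u hu).1, fun t u hu => (h1 t u hu).2, h3⟩

omit [Fintype V] [Fintype ι] in
lemma isL_congr {e : ι × Bool ↪ V} {X : Finset V} {G G' : SimpleGraph V}
    (h : skel e X G = skel e X G') (t : ι) (u : V) : isL e X G t u ↔ isL e X G' t u := by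
  rw [skel_eq_iff] at h
  unfold isL
  refine and_congr_right fun hu => ?_
  have := h.1 t u hu
  tauto

/-- Two graphs with the same unchanged part that agree on which vertices see the first vertex of
each pair are equal. -/
lemma eq_of_skel (e : ι × Bool ↪ V) (X : Finset V) (G G' : SimpleGraph V)
    (h : skel e X G = skel e X G')
    (h' : ∀ t u, isL e X G t u → (G.Adj (e (t, true)) u ↔ G'.Adj (e (t, true)) u)) : G = G' := by
  have hL := isL_congr h
  rw [skel_eq_iff] at h
  have key : ∀ v w, v ∈ Set.range e → w ∈ X → (G.Adj v w ↔ G'.Adj v w) := by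
    rintro _ w ⟨⟨t, s⟩, rfl⟩ hw
    have h1 := h.1 t w hw
    have h2 := h' t w
    simp only [isL, hw, true_and] at h2
    clear h h' hL
    cases s <;> grind
  ext v w
  by_cases h1 : v ∈ Set.range e ∧ w ∈ X
  · exact key v w h1.1 h1.2
  · by_cases h2 : w ∈ Set.range e ∧ v ∈ X
    · rw [G.adj_comm, G'.adj_comm]; exact key w v h2.1 h2.2
    · exact h.2 v w h1 h2

/-- In a fibre of `skel`, compatibility with `q` leaves few graphs. Every first vertex `(t, true)` lies
in the cluster `l` of `q` and no second vertex `(t, false)` does, so the degree of `u` into `l`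
determines how many of the `λ_u` pairs seen privately by `u` are seen through their first vertex. -/
lemma fibre_upper (q : V → Fin k) (a : Fin k → Fin k → ℕ) (e : ι × Bool ↪ V) (X : Finset V)
    (hX : ∀ z, e z ∉ X) (l l' : Fin k) (hl : l ≠ l')
    (hq : ∀ t, q (e (t, true)) = l ∧ q (e (t, false)) = l') (B : Finset (SimpleGraph V))
    (G0 : SimpleGraph V) (hG0 : Cmp q a G0)
    (hB : ∀ G ∈ B, Cmp q a G ∧ skel e X G = skel e X G0) :
    #B ≤ ∏ u : V, (#(LamU e X G0 u)).choose (#(LamU e X G0 u) / 2) := by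
  -- the number of edges from `u` to the `l`-vertices of the pairs is determined
  have hr : ∀ G ∈ B, ∀ u, #((LamU e X G0 u).filter fun t => G.Adj (e (t, true)) u) =
      #((LamU e X G0 u).filter fun t => G0.Adj (e (t, true)) u) := by
    intro G hG u
    by_cases hu : u ∈ X
    swap
    · have : LamU e X G0 u = ∅ := by
        unfold LamU isL; simp [hu]
      simp [this]
    obtain ⟨hGq, hs⟩ := hB G hG
    have split : ∀ H : SimpleGraph V, skel e X H = skel e X G0 → #(nbc q H u l) =
        #((LamU e X G0 u).filter fun t => H.Adj (e (t, true)) u) +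
        #(univ.filter fun w => q w = l ∧ G0.Adj u w ∧
          ∀ t, isL e X G0 t u → w ≠ e (t, true)) := by
      intro H hH
      have hL := isL_congr hH
      rw [skel_eq_iff] at hH
      rw [← card_filter_add_card_filter_not (s := nbc q H u l)
        (fun w => ∃ t, isL e X G0 t u ∧ w = e (t, true))]
      congr 1
      · symm
        refine card_bij (fun t _ => e (t, true)) ?_ ?_ ?_
        · intro t ht
          simp only [LamU, mem_filter, mem_univ, true_and] at ht
          simp only [mem_filter, mem_nbc]
          exact ⟨⟨(hq t).1, ht.2.symm⟩, t, ht.1, rfl⟩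
        · intro t _ t' _ h
          have := e.injective h
          simpa using this
        · intro w hw
          simp only [mem_filter, mem_nbc] at hw
          obtain ⟨⟨_, h2⟩, t, h3, rfl⟩ := hw
          refine ⟨t, ?_, rfl⟩
          simp only [LamU, mem_filter, mem_univ, true_and]
          exact ⟨h3, h2.symm⟩
      · congr 1
        ext w
        simp only [mem_filter, mem_nbc, mem_univ, true_and]
        push Not
        constructor
        · rintro ⟨⟨h1, h2⟩, h3⟩
          refine ⟨h1, ?_, h3⟩
          by_cases hw : w ∈ Set.range e
          · obtain ⟨⟨t, s⟩, rfl⟩ := hw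
            have hs : s = true := by
              cases s
              · exact absurd ((hq t).2.symm.trans h1).symm hl
              · rfl
            subst hs
            have h4 := hH.1 t u hu
            have h5 := fun hh => h3 t hh rfl
            unfold isL at h5
            rw [H.adj_comm] at h2
            rw [G0.adj_comm]
            tauto
          · rw [← hH.2 u w]
            · exact h2
            · rintro ⟨⟨z, rfl⟩, _⟩; exact hX z hu
            · rintro ⟨h, _⟩; exact hw h
        · rintro ⟨h1, h2, h3⟩
          refine ⟨⟨h1, ?_⟩, h3⟩
          by_cases hw : w ∈ Set.range e
          · obtain ⟨⟨t, s⟩, rfl⟩ := hw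
            have hs : s = true := by
              cases s
              · exact absurd ((hq t).2.symm.trans h1).symm hl
              · rfl
            subst hs
            have h4 := hH.1 t u hu
            have h5 := fun hh => h3 t hh rfl
            unfold isL at h5
            rw [G0.adj_comm] at h2
            rw [H.adj_comm]
            tauto
          · rw [hH.2 u w]
            · exact h2
            · rintro ⟨⟨z, rfl⟩, _⟩; exact hX z hu
            · rintro ⟨h, _⟩; exact hw h
    have s1 := split G hs
    have s2 := split G0 rfl
    rw [hGq] at s1
    rw [hG0] at s2
    omega
  calc #B ≤ #(Fintype.piFinset fun u : V => powersetCard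
        #((LamU e X G0 u).filter fun t => G0.Adj (e (t, true)) u) (LamU e X G0 u)) := by
        refine card_le_card_of_injOn
          (fun G u => (LamU e X G0 u).filter fun t => G.Adj (e (t, true)) u) ?_ ?_
        · intro G hG
          rw [mem_coe, Fintype.mem_piFinset]
          intro u
          exact mem_powersetCard.2 ⟨filter_subset _ _, hr G hG u⟩
        · intro G hG G' hG' h
          refine eq_of_skel e X G G' ((hB G hG).2.trans (hB G' hG').2.symm) ?_
          intro t u htu
          rw [isL_congr (hB G hG).2] at htu
          have h1 : t ∈ LamU e X G0 u := mem_filter.2 ⟨mem_univ _, htu⟩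
          have h2 := congrArg (t ∈ ·) (congrFun h u)
          simpa [h1] using h2
    _ = ∏ u : V, (#(LamU e X G0 u)).choose
          #((LamU e X G0 u).filter fun t => G0.Adj (e (t, true)) u) := by
        rw [Fintype.card_piFinset]; simp only [card_powersetCard]
    _ ≤ _ := prod_le_prod' fun u _ => Nat.choose_le_middle _ _

end RSBM

/-! ### Rewiring and the lower bound on rewiring classes -/

namespace RSBM
open Finset
open scoped Classical

variable {V : Type} [Fintype V] {k : ℕ} {ι : Type} [Fintype ι]

/-- The permutations that rewire `G` so that `f (t, i)` becomes the set of vertices of cluster `i`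
joined to the vertex `(t, true)` only. -/
noncomputable def rwψ (e : ι × Bool ↪ V) (X : Finset V) (p : V → Fin k) (G : SimpleGraph V)
    (f : ι × Fin k → Finset V) (b : V) : Equiv.Perm V :=
  pairPerm e fun t => isL e X G t b ∧ ¬ (b ∈ f (t, p b) ↔ G.Adj (e (t, true)) b)

section
variable (e : ι × Bool ↪ V) (X : Finset V) (hX : ∀ z, e z ∉ X) (p : V → Fin k) (G : SimpleGraph V)
    (f : ι × Fin k → Finset V)

omit [Fintype V] [Fintype ι] in
lemma rwψ_notMem (b : V) (hb : b ∉ X) : rwψ e X p G f b = 1 :=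
  pairPerm_false _ _ fun _ h => hb h.1.1

omit [Fintype V] [Fintype ι] in
include hX in
lemma rwψ_fix (b u : V) (hu : u ∈ X) : rwψ e X p G f b u = u :=
  pairPerm_notMem _ _ _ (by rintro ⟨z, rfl⟩; exact hX z hu)

omit [Fintype V] [Fintype ι] in
lemma rw_adj_true (t : ι) (b : V) : G.Adj (rwψ e X p G f b (e (t, true))) b ↔
    (isL e X G t b ∧ b ∈ f (t, p b)) ∨ (¬ isL e X G t b ∧ G.Adj (e (t, true)) b) := by
  unfold rwψ
  rw [pairPerm_apply]
  by_cases h : isL e X G t b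
  · have h2 := h.2
    by_cases h3 : b ∈ f (t, p b) <;> by_cases h4 : G.Adj (e (t, true)) b <;>
      simp_all
  · simp [h]

omit [Fintype V] [Fintype ι] in
lemma rw_adj_false (t : ι) (b : V) : G.Adj (rwψ e X p G f b (e (t, false))) b ↔
    (isL e X G t b ∧ b ∉ f (t, p b)) ∨ (¬ isL e X G t b ∧ G.Adj (e (t, false)) b) := by
  unfold rwψ
  rw [pairPerm_apply]
  by_cases h : isL e X G t b
  · have h2 := h.2
    by_cases h3 : b ∈ f (t, p b) <;> by_cases h4 : G.Adj (e (t, true)) b <;>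
      simp_all
  · simp [h]

omit [Fintype V] [Fintype ι] in
include hX in
lemma rw_flip_adj (z : ι × Bool) (u : V) : (flip G (rwψ e X p G f)).Adj (e z) u ↔
    G.Adj (rwψ e X p G f u (e z)) u := by
  rw [flip_adj, rwψ_notMem e X p G f (e z) (hX z)]; rfl

omit [Fintype V] [Fintype ι] in
include hX in
lemma rw_skel : skel e X (flip G (rwψ e X p G f)) = skel e X G := by
  rw [skel_eq_iff]
  constructor
  · intro t u hu
    rw [rw_flip_adj e X hX, rw_flip_adj e X hX, rw_adj_true, rw_adj_false]
    simp only [isL, hu, true_and]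
    grind
  · intro v w h1 h2
    rw [flip_adj]
    have key : ∀ v w, ¬ (v ∈ Set.range e ∧ w ∈ X) → rwψ e X p G f w v = v := by
      intro v w h
      by_cases hw : w ∈ X
      · exact pairPerm_notMem _ _ _ fun hv => h ⟨hv, hw⟩
      · rw [rwψ_notMem _ _ _ _ _ _ hw]; rfl
    rw [key v w h1, key w v h2]

include hX in
/-- Rewiring preserves compatibility with `p` when every pair lies in one cluster of `p` and every
first vertex keeps its number of private neighbours in each cluster. -/
lemma rw_cmp (a : Fin k → Fin k → ℕ) (hG : Cmp p a G)
    (hp : ∀ t, p (e (t, true)) = p (e (t, false)))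
    (hf : ∀ x, f x ∈ powersetCard (hT e X p G x.1 x.2) (LamT e X p G x.1 x.2)) :
    Cmp p a (flip G (rwψ e X p G f)) := by
  refine flip_cmp p a G _ X hG (fun b hb => rwψ_notMem e X p G f b hb)
    (fun b u hu => rwψ_fix e X hX p G f b u hu) ?_ ?_
  · intro b x
    unfold rwψ
    by_cases hx : x ∈ Set.range e
    · obtain ⟨⟨t, s⟩, rfl⟩ := hx
      rw [pairPerm_apply]
      have := hp t
      split_ifs <;> cases s <;> simp [this]
    · rw [pairPerm_notMem _ _ _ hx]
  · intro v hv j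
    by_cases hve : v ∈ Set.range e
    swap
    · rw [← hG v j]
      congr 1
      ext b
      rw [mem_nbc]
      simp only [mem_filter, mem_univ, true_and]
      unfold rwψ
      rw [pairPerm_notMem _ _ _ hve]
    obtain ⟨⟨t, s⟩, rfl⟩ := hve
    obtain ⟨hsub, hcard⟩ := mem_powersetCard.1 (hf (t, j))
    simp only at hsub hcard
    rw [← hG _ j, ← card_filter_add_card_filter_not (s := nbc p G (e (t, s)) j)
      (fun b => isL e X G t b), ← card_filter_add_card_filter_not
        (s := univ.filter fun b => p b = j ∧ G.Adj (rwψ e X p G f b (e (t, s))) b)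
      (fun b => isL e X G t b)]
    have e2 : ((univ.filter fun b => p b = j ∧ G.Adj (rwψ e X p G f b (e (t, s))) b).filter
        fun b => ¬ isL e X G t b) = (nbc p G (e (t, s)) j).filter fun b => ¬ isL e X G t b := by
      ext b
      simp only [mem_filter, mem_univ, true_and, mem_nbc]
      cases s
      · rw [rw_adj_false]; tauto
      · rw [rw_adj_true]; tauto
    rw [e2]
    congr 1
    cases s
    · have l1 : ((univ.filter fun b => p b = j ∧ G.Adj (rwψ e X p G f b (e (t, false))) b).filter
        fun b => isL e X G t b) = LamT e X p G t j \ f (t, j) := by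
        ext b
        simp only [mem_filter, mem_univ, true_and, Finset.mem_sdiff, LamT]
        rw [rw_adj_false]
        constructor
        · rintro ⟨⟨rfl, h⟩, h'⟩; tauto
        · rintro ⟨⟨rfl, h⟩, h'⟩; tauto
      have l2 : (nbc p G (e (t, false)) j).filter (fun b => isL e X G t b) =
          LamT e X p G t j \ ((LamT e X p G t j).filter fun u => G.Adj (e (t, true)) u) := by
        ext b
        simp only [mem_filter, mem_univ, true_and, Finset.mem_sdiff, LamT, mem_nbc]
        unfold isL
        tauto
      rw [l1, l2, card_sdiff_of_subset hsub, card_sdiff_of_subset (filter_subset _ _), hcard]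
      rfl
    · have l1 : ((univ.filter fun b => p b = j ∧ G.Adj (rwψ e X p G f b (e (t, true))) b).filter
        fun b => isL e X G t b) = f (t, j) := by
        ext b
        simp only [mem_filter, mem_univ, true_and]
        rw [rw_adj_true]
        constructor
        · rintro ⟨⟨rfl, h⟩, h'⟩; tauto
        · intro h
          have := hsub h
          simp only [LamT, mem_filter, mem_univ, true_and] at this
          obtain ⟨rfl, h3⟩ := this
          tauto
      rw [l1, hcard]
      unfold hT
      congr 1
      ext b
      simp only [mem_filter, mem_univ, true_and, LamT, mem_nbc]
      tauto

end

/-- A fibre of `skel` contains many graphs compatible with `p`: for every pair `t` and every cluster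
`i`, any set of `hT t i` private neighbours of `t` in cluster `i` may be attached to the first
vertex of `t`, the others being attached to the second one. -/
lemma fibre_lower (p : V → Fin k) (a : Fin k → Fin k → ℕ) (e : ι × Bool ↪ V) (X : Finset V)
    (hX : ∀ z, e z ∉ X) (hp : ∀ t, p (e (t, true)) = p (e (t, false)))
    (G : SimpleGraph V) (hG : Cmp p a G) :
    ∏ t : ι, ∏ i : Fin k, (#(LamT e X p G t i)).choose (hT e X p G t i) ≤
      #((Gs p a).filter fun H => skel e X H = skel e X G) := by
  calc ∏ t : ι, ∏ i : Fin k, (#(LamT e X p G t i)).choose (hT e X p G t i)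
      = #(Fintype.piFinset fun x : ι × Fin k =>
          powersetCard (hT e X p G x.1 x.2) (LamT e X p G x.1 x.2)) := by
        rw [Fintype.card_piFinset, Fintype.prod_prod_type]; simp only [card_powersetCard]
    _ ≤ _ := by
        refine card_le_card_of_injOn (fun f => flip G (rwψ e X p G f)) ?_ ?_
        · intro f hf
          rw [mem_coe, Fintype.mem_piFinset] at hf
          exact mem_filter.2 ⟨mem_filter.2 ⟨mem_univ _, rw_cmp e X hX p G f a hG hp hf⟩,
            rw_skel e X hX p G f⟩
        · intro f hf f' hf' h
          rw [mem_coe, Fintype.mem_piFinset] at hf hf'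
          funext x
          obtain ⟨t, i⟩ := x
          have hs := (mem_powersetCard.1 (hf (t, i))).1
          have hs' := (mem_powersetCard.1 (hf' (t, i))).1
          have aux : ∀ b ∈ LamT e X p G t i, (b ∈ f (t, i) ↔ b ∈ f' (t, i)) := by
            intro b hb
            simp only [LamT, mem_filter, mem_univ, true_and] at hb
            obtain ⟨rfl, hb⟩ := hb
            have h1 := rw_flip_adj e X hX p G f (t, true) b
            have h2 := rw_flip_adj e X hX p G f' (t, true) b
            rw [rw_adj_true] at h1 h2
            simp only at h
            rw [h] at h1
            tauto
          ext b
          exact ⟨fun hb => (aux b (hs hb)).1 hb, fun hb => (aux b (hs' hb)).2 hb⟩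

/-- The rewiring principle: if for each graph of `B` the lower bound on its fibre exceeds the upper
bound by a factor `g`, then `B`, which consists of graphs compatible with both `p` and `q`, makes up
at most a fraction `1 / g` of the graphs compatible with `p`. -/
lemma rewire (p q : V → Fin k) (a : Fin k → Fin k → ℕ) (e : ι × Bool ↪ V) (X : Finset V)
    (hX : ∀ z, e z ∉ X) (hp : ∀ t, p (e (t, true)) = p (e (t, false))) (l l' : Fin k) (hl : l ≠ l')
    (hq : ∀ t, q (e (t, true)) = l ∧ q (e (t, false)) = l') (B : Finset (SimpleGraph V))
    (hB : ∀ G ∈ B, Cmp p a G ∧ Cmp q a G) (g : ℝ) (hg : 0 ≤ g)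
    (H : ∀ G ∈ B, g * ((∏ u : V, (#(LamU e X G u)).choose (#(LamU e X G u) / 2) : ℕ) : ℝ) ≤
      ((∏ t : ι, ∏ i : Fin k, (#(LamT e X p G t i)).choose (hT e X p G t i) : ℕ) : ℝ)) :
    g * #B ≤ #(Gs p a) := by
  have c1 := card_eq_sum_card_fiberwise (f := skel e X) (s := B) (t := B.image (skel e X))
    (fun G hG => mem_image_of_mem _ hG)
  have c2 : ∑ y ∈ B.image (skel e X), #((Gs p a).filter fun G => skel e X G = y) ≤ #(Gs p a) := by
    have := card_eq_sum_card_fiberwise (f := skel e X) (s := Gs p a)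
      (t := (Gs p a).image (skel e X)) (fun G hG => mem_image_of_mem _ hG)
    rw [this]
    refine sum_le_sum_of_subset (image_subset_image fun G hG => ?_)
    exact mem_filter.2 ⟨mem_univ _, (hB G hG).1⟩
  calc g * #B = ∑ y ∈ B.image (skel e X), g * #(B.filter fun G => skel e X G = y) := by
        rw [c1]; push_cast; rw [mul_sum]
    _ ≤ ∑ y ∈ B.image (skel e X), (#((Gs p a).filter fun G => skel e X G = y) : ℝ) := by
        refine sum_le_sum fun y hy => ?_
        obtain ⟨G, hG, rfl⟩ := mem_image.1 hy
        have u1 := fibre_upper q a e X hX l l' hl hq (B.filter fun H => skel e X H = skel e X G) G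
          (hB G hG).2 (fun H hH => ⟨(hB H (mem_filter.1 hH).1).2, (mem_filter.1 hH).2⟩)
        have u2 := fibre_lower p a e X hX hp G (hB G hG).1
        calc g * (#(B.filter fun H => skel e X H = skel e X G) : ℝ)
            ≤ g * ((∏ u : V, (#(LamU e X G u)).choose (#(LamU e X G u) / 2) : ℕ) : ℝ) := by
              refine mul_le_mul_of_nonneg_left ?_ hg
              exact_mod_cast u1
          _ ≤ _ := H G hG
          _ ≤ _ := by exact_mod_cast u2
    _ ≤ #(Gs p a) := by exact_mod_cast c2

end RSBM

/-! ### Nearby partitions -/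

namespace RSBM
open Finset
open scoped Classical

variable {V : Type} [Fintype V] {k : ℕ}

lemma card_nbrs (p : V → Fin k) (a : Fin k → Fin k → ℕ) (d : ℕ) (hd : ∀ i, ∑ j, a i j = d)
    (G : SimpleGraph V) (hG : Cmp p a G) (v : V) : #(univ.filter fun u => G.Adj v u) = d := by
  rw [card_eq_sum_card_fiberwise (f := p) (t := univ) (fun _ _ => mem_univ _), ← hd (p v)]
  refine sum_congr rfl fun j _ => ?_
  rw [← hG v j]
  congr 1
  ext u
  simp [mem_nbc, and_comm]

/-- Under expansion, a compatible partition `q` that agrees with `σ ∘ p` outside a small set `S` agrees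
with it everywhere. Otherwise `S` has a unique neighbour `u ∉ S`, whose only neighbour in `S` is some `v`; passing
from `σ ∘ p` to `q` then costs `u` its neighbour `v` in the cluster `σ (p v)`, and no other vertex
makes up for it. -/
lemma near_eq (p q : V → Fin k) (a : Fin k → Fin k → ℕ) (n d L : ℕ) (hd : ∀ i, ∑ j, a i j = d)
    (hn : ∀ i, #(univ.filter fun v => p v = i) = n) (hd0 : 1 ≤ d) (hL : 4 ≤ L)
    (G : SimpleGraph V) (hp : Cmp p a G) (hq : Cmp q a G)
    (hE : Expand (fun _ _ => True) univ d L n G) (σ : Equiv.Perm (Fin k))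
    (hS : L * (d * #(univ.filter fun v => q v ≠ σ (p v))) ≤ n) : ∀ v, q v = σ (p v) := by
  set S := univ.filter fun v => q v ≠ σ (p v) with hSdef
  have memS : ∀ v, v ∉ S ↔ q v = σ (p v) := by intro v; simp [hSdef]
  by_contra hne
  push Not at hne
  obtain ⟨v0, hv0⟩ := hne
  have hSn : S.Nonempty := ⟨v0, by simp [hSdef, hv0]⟩
  have hS1 : 1 ≤ #S := card_pos.2 hSn
  -- every cluster has a vertex not affected by `S`, which determines `a` along `σ`
  have haσ : ∀ i j, a (σ i) (σ j) = a i j := by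
    intro i j
    set NS := S.biUnion fun v => univ.filter fun u => G.Adj v u with hNS
    have hcard : #(S ∪ NS) < n := by
      have h1 := card_union_le S NS
      have h2 : #NS ≤ #S * d := by
        refine card_biUnion_le_card_mul _ _ _ fun v _ => ?_
        rw [card_nbrs p a d hd G hp v]
      have h3 : 4 * (d * #S) ≤ n := (Nat.mul_le_mul_right _ hL).trans hS
      have h4 : #S ≤ d * #S := Nat.le_mul_of_pos_left _ hd0
      rw [mul_comm] at h2
      omega
    obtain ⟨u, hu, hu'⟩ := exists_mem_notMem_of_card_lt_card (hcard.trans_eq (hn i).symm)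
    have hui : p u = i := (mem_filter.1 hu).2
    rw [mem_union, not_or, memS] at hu'
    have e := hq u (σ j)
    rw [hu'.1, hui] at e
    rw [← e, ← hui, ← hp u j]
    congr 1
    ext w
    rw [mem_nbc, mem_nbc]
    refine and_congr_left fun hw => ?_
    have : w ∉ S := fun hc => hu'.2 (mem_biUnion.2 ⟨w, hc, by simpa using hw.symm⟩)
    rw [memS] at this
    rw [this, σ.injective.eq_iff]
  -- a unique neighbour `u` of `S`, joined to the vertex `v` of `S`
  have hU := hE S (subset_univ _) hSn hS
  have hUn : (Uniq (fun _ _ => True) G S).Nonempty := by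
    rw [← card_pos]
    have : 1 ≤ d * #S := Nat.mul_pos hd0 hS1
    omega
  obtain ⟨u, hu⟩ := hUn
  simp only [Uniq, mem_filter, mem_univ, true_and] at hu
  obtain ⟨huS, hu1⟩ := hu
  obtain ⟨v, hv⟩ := card_eq_one.1 hu1
  have hv' : v ∈ S ∧ G.Adj v u := by
    have : v ∈ ({v} : Finset V) := mem_singleton_self v
    rw [← hv] at this
    exact mem_filter.1 this
  have e := hq u (σ (p v))
  rw [(memS u).1 huS, haσ] at e
  have e2 : nbc q G u (σ (p v)) = (nbc p G u (p v)).erase v := by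
    ext w
    rw [mem_nbc, mem_erase, mem_nbc]
    by_cases hwv : w = v
    · subst hwv
      have : q w ≠ σ (p w) := fun h => (memS w).2 h hv'.1
      simp [this]
    · have : G.Adj u w → w ∉ S := by
        intro h hc
        have : w ∈ ({v} : Finset V) := by
          rw [← hv]; exact mem_filter.2 ⟨hc, h.symm⟩
        exact hwv (mem_singleton.1 this)
      constructor
      · rintro ⟨h1, h2⟩
        have h3 := (memS w).1 (this h2)
        exact ⟨hwv, σ.injective (h3.symm.trans h1), h2⟩
      · rintro ⟨_, h1, h2⟩
        have h3 := (memS w).1 (this h2)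
        exact ⟨h3.trans (by rw [h1]), h2⟩
  have hvm : v ∈ nbc p G u (p v) := (mem_nbc _ _ _ _ _).2 ⟨rfl, hv'.2.symm⟩
  rw [e2, card_erase_of_mem hvm, hp] at e
  have := card_pos.2 ⟨v, hvm⟩
  rw [hp] at this
  omega

/-- Two equipartitions are close up to relabelling, or some cluster of the first meets two clusters
of the second in at least `T` vertices each. -/
lemma near_or_split (p q : V → Fin k) (n T : ℕ)
    (hp : ∀ i, #(univ.filter fun v => p v = i) = n) (hq : ∀ i, #(univ.filter fun v => q v = i) = n)
    (hT : 2 * (k * T) < n) :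
    (∃ j l l', l ≠ l' ∧ T ≤ #(univ.filter fun v => p v = j ∧ q v = l) ∧
      T ≤ #(univ.filter fun v => p v = j ∧ q v = l')) ∨
    ∃ σ : Equiv.Perm (Fin k), #(univ.filter fun v => q v ≠ σ (p v)) ≤ k * k * T := by
  by_cases h : ∃ j l l', l ≠ l' ∧ T ≤ #(univ.filter fun v => p v = j ∧ q v = l) ∧
      T ≤ #(univ.filter fun v => p v = j ∧ q v = l')
  · exact Or.inl h
  right
  push Not at h
  have hrow : ∀ j, ∑ l, #(univ.filter fun v => p v = j ∧ q v = l) = n := by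
    intro j
    rw [← hp j, card_eq_sum_card_fiberwise (f := q) (t := univ) (fun _ _ => mem_univ _)]
    refine sum_congr rfl fun l _ => ?_
    rw [filter_filter]
  have hcol : ∀ l, ∑ j, #(univ.filter fun v => p v = j ∧ q v = l) = n := by
    intro l
    rw [← hq l, card_eq_sum_card_fiberwise (f := p) (t := univ) (fun _ _ => mem_univ _)]
    refine sum_congr rfl fun j _ => ?_
    rw [filter_filter]; congr 1; ext v; simp [and_comm]
  have hex : ∀ j, ∃ l, T ≤ #(univ.filter fun v => p v = j ∧ q v = l) := by
    intro j
    by_contra hc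
    push Not at hc
    have := sum_le_sum fun l (_ : l ∈ (univ : Finset (Fin k))) => (hc l).le
    rw [hrow, sum_const, card_univ, Fintype.card_fin, smul_eq_mul] at this
    omega
  -- `s j` is the only cluster of `q` that meets the cluster `j` of `p` substantially
  choose s hs using hex
  have hother : ∀ j, #(univ.filter fun v => p v = j ∧ q v ≠ s j) ≤ k * T := by
    intro j
    rw [card_eq_sum_card_fiberwise (f := q) (t := univ) (fun _ _ => mem_univ _)]
    refine (sum_le_sum (g := fun _ => T) fun l _ => ?_).trans (by simp)
    rw [filter_filter]
    by_cases hl : s j = l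
    · rw [filter_eq_empty_iff.2]
      · simp
      · rintro v _ ⟨⟨_, h2⟩, h3⟩; exact h2 (h3.trans hl.symm)
    · refine le_trans (card_le_card fun v hv => ?_) (h j (s j) l hl (hs j)).le
      simp only [mem_filter, mem_univ, true_and] at hv ⊢
      exact ⟨hv.1.1, hv.2⟩
  have hmain : ∀ j, n ≤ #(univ.filter fun v => p v = j ∧ q v = s j) + k * T := by
    intro j
    have := card_filter_add_card_filter_not (s := univ.filter fun v => p v = j) (fun v => q v = s j)
    rw [filter_filter, filter_filter, hp] at this
    have := hother j
    simp only [ne_eq] at this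
    omega
  have hinj : Function.Injective s := by
    intro j j' hjj
    by_contra hne
    have h1 := hmain j
    have h2 := hmain j'
    have h3 := hcol (s j)
    rw [← hjj] at h2
    have : #(univ.filter fun v => p v = j ∧ q v = s j) + #(univ.filter fun v => p v = j' ∧ q v = s j)
        ≤ ∑ i, #(univ.filter fun v => p v = i ∧ q v = s j) := by
      rw [← sum_pair (f := fun i => #(univ.filter fun v => p v = i ∧ q v = s j)) hne]
      exact sum_le_sum_of_subset (subset_univ _)
    omega
  refine ⟨Equiv.ofBijective s (Finite.injective_iff_bijective.1 hinj), ?_⟩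
  rw [card_eq_sum_card_fiberwise (f := p) (t := univ) (fun _ _ => mem_univ _)]
  refine (sum_le_sum (g := fun _ => k * T) fun j _ => ?_).trans (by simp [mul_assoc])
  refine le_trans (card_le_card fun v hv => ?_) (hother j)
  simp only [mem_filter, mem_univ, true_and, Equiv.ofBijective_apply] at hv ⊢
  exact ⟨hv.2, hv.2 ▸ hv.1⟩

end RSBM

/-! ### Partitions at an intermediate distance -/

namespace RSBM
open Finset
open scoped Classical

variable {V : Type} [Fintype V] {k : ℕ} {ι : Type} [Fintype ι]

/-- Some cluster of `p` meets two clusters of `q` in at least `T` vertices each. -/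
def Split (p q : V → Fin k) (T : ℕ) : Prop :=
  ∃ j l l', l ≠ l' ∧ T ≤ #(univ.filter fun v => p v = j ∧ q v = l) ∧
      T ≤ #(univ.filter fun v => p v = j ∧ q v = l')

/-- The pairs used for rewiring: the first vertices lie in `l` and the second ones in `l′`. -/
lemma exists_pairs (p q : V → Fin k) (T : ℕ) (hι : Fintype.card ι ≤ T) (j l l' : Fin k)
    (hl : l ≠ l') (h1 : T ≤ #(univ.filter fun v => p v = j ∧ q v = l))
    (h2 : T ≤ #(univ.filter fun v => p v = j ∧ q v = l')) :
    ∃ e : ι × Bool ↪ V, (∀ z, p (e z) = j) ∧ ∀ t, q (e (t, true)) = l ∧ q (e (t, false)) = l' := by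
  have f1 : Nonempty (ι ↪ {v // v ∈ univ.filter fun v => p v = j ∧ q v = l}) := by
    apply Function.Embedding.nonempty_of_card_le
    rw [Fintype.card_coe]; omega
  have f2 : Nonempty (ι ↪ {v // v ∈ univ.filter fun v => p v = j ∧ q v = l'}) := by
    apply Function.Embedding.nonempty_of_card_le
    rw [Fintype.card_coe]; omega
  obtain ⟨f1⟩ := f1
  obtain ⟨f2⟩ := f2
  have g1 : ∀ t, p (f1 t) = j ∧ q (f1 t) = l := fun t => (mem_filter.1 (f1 t).2).2
  have g2 : ∀ t, p (f2 t) = j ∧ q (f2 t) = l' := fun t => (mem_filter.1 (f2 t).2).2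
  refine ⟨⟨fun x => if x.2 then (f1 x.1 : V) else (f2 x.1 : V), ?_⟩, ?_, ?_⟩
  · rintro ⟨t, s⟩ ⟨t', s'⟩ h
    cases s <;> cases s' <;> simp only [Bool.false_eq_true, if_true, if_false] at h
    · have := f2.injective (Subtype.ext h); rw [this]
    · exact absurd ((g2 t).2.symm.trans ((congrArg q h).trans (g1 t').2)).symm hl
    · exact absurd ((g1 t).2.symm.trans ((congrArg q h).trans (g2 t').2)) hl
    · have := f1.injective (Subtype.ext h); rw [this]
  · rintro ⟨t, s⟩
    cases s
    · exact (g2 t).1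
    · exact (g1 t).1
  · intro t
    exact ⟨(g1 t).2, (g2 t).2⟩

/-- Double counting of the private incidences between vertices and pairs. -/
lemma sum_LamU (e : ι × Bool ↪ V) (X : Finset V) (p : V → Fin k) (G : SimpleGraph V) :
    ∑ u : V, #(LamU e X G u) = ∑ t : ι, ∑ i : Fin k, #(LamT e X p G t i) := by
  have h1 : ∀ t, ∑ i : Fin k, #(LamT e X p G t i) = #(univ.filter fun u => isL e X G t u) := by
    intro t
    rw [card_eq_sum_card_fiberwise (f := p) (t := univ) (fun _ _ => mem_univ _)]
    refine sum_congr rfl fun i _ => ?_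
    rw [filter_filter]
    congr 1; ext u; simp [LamT, and_comm]
  simp only [h1, LamU, card_filter]
  exact sum_comm

lemma hT_le (e : ι × Bool ↪ V) (X : Finset V) (p : V → Fin k) (a : Fin k → Fin k → ℕ)
    (G : SimpleGraph V) (hG : Cmp p a G) (t : ι) (i : Fin k) :
    hT e X p G t i ≤ a (p (e (t, true))) i := by
  rw [← hG]
  refine card_le_card fun u hu => ?_
  simp only [LamT, mem_filter, mem_univ, true_and] at hu
  exact (mem_nbc _ _ _ _ _).2 ⟨hu.1.1, hu.2⟩

lemma hT_le' (e : ι × Bool ↪ V) (X : Finset V) (p : V → Fin k) (a : Fin k → Fin k → ℕ)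
    (G : SimpleGraph V) (hG : Cmp p a G) (t : ι) (i : Fin k) :
    #(LamT e X p G t i) ≤ hT e X p G t i + a (p (e (t, false))) i := by
  rw [← hG]
  have := card_filter_add_card_filter_not (s := LamT e X p G t i) (fun u => G.Adj (e (t, true)) u)
  rw [← this]
  refine Nat.add_le_add_left (card_le_card fun u hu => ?_) _
  obtain ⟨hu, hu'⟩ := mem_filter.1 hu
  obtain ⟨hu1, hu2⟩ := (mem_filter.1 hu).2
  have := hu2.2
  exact (mem_nbc _ _ _ _ _).2 ⟨hu1, by tauto⟩

lemma two_pow_le_choose (a b : ℕ) : 2 ^ (min a b) ≤ (a + b).choose a := by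
  induction a generalizing b with
  | zero => simp
  | succ a ih =>
    cases b with
    | zero => simp
    | succ b =>
      have h1 : min (a + 1) (b + 1) = min a b + 1 := by omega
      have h2 : a + 1 + (b + 1) = (a + b + 1) + 1 := by ring
      rw [h1, h2, Nat.choose_succ_succ, pow_succ]
      have h3 : (a + b).choose a ≤ (a + b + 1).choose a := Nat.choose_le_choose _ (by omega)
      have h4 : (a + b).choose a ≤ (a + b + 1).choose (a + 1) := by
        rw [Nat.choose_succ_succ]; omega
      have := ih b
      rw [Nat.succ_eq_add_one]
      omega

lemma choose_half_le (m : ℕ) : m.choose (m / 2) ≤ 2 ^ (m - 1) := by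
  cases m with
  | zero => simp
  | succ m =>
    rw [Nat.add_sub_cancel]
    rcases Nat.eq_zero_or_pos ((m + 1) / 2) with h | h
    · rw [h]; simpa using Nat.one_le_two_pow
    · obtain ⟨c, hc⟩ : ∃ c, (m + 1) / 2 = c + 1 := ⟨(m + 1) / 2 - 1, by omega⟩
      rw [hc, Nat.choose_succ_succ, ← Nat.sum_range_choose, ← sum_pair (a := c) (b := c + 1)
        (f := fun i => m.choose i) (by omega)]
      refine sum_le_sum_of_subset fun x hx => ?_
      simp only [mem_insert, mem_singleton] at hx
      rw [mem_range]
      omega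

/-- The vertices that see exactly one vertex of a batch `Y` of pairs lie in some `LamU`. -/
lemma uniq_pos (E : V → V → Prop) (e : ι × Bool ↪ V) (X : Finset V) (G : SimpleGraph V)
    (I : Finset ι) (hE : ∀ t ∈ I, ∀ s, ∀ u ∈ X, E (e (t, s)) u) (u : V) (huX : u ∈ X)
    (hu : u ∈ Uniq E G ((I ×ˢ univ).map e)) : ∃ t ∈ I, isL e X G t u := by
  simp only [Uniq, mem_filter, mem_univ, true_and] at hu
  obtain ⟨v, hv⟩ := card_eq_one.1 hu.2
  have hv' : v ∈ ({v} : Finset V) := mem_singleton_self v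
  rw [← hv, mem_filter, Finset.mem_map] at hv'
  obtain ⟨⟨⟨t, s⟩, hz, rfl⟩, _, hv2⟩ := hv'
  have htI : t ∈ I := (mem_product.1 hz).1
  have hother : ¬ G.Adj (e (t, !s)) u := by
    intro h
    have : e (t, !s) ∈ ({e (t, s)} : Finset V) := by
      rw [← hv]
      exact mem_filter.2 ⟨mem_map_of_mem _ (by simpa using htI), hE t htI _ u huX, h⟩
    have := e.injective (mem_singleton.1 this)
    simp at this
  refine ⟨t, htI, huX, ?_⟩
  cases s
  · simp only [Bool.not_false] at hother; tauto
  · simp only [Bool.not_true] at hother; tauto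

/-- Partitions at an intermediate distance from `p`: each of them is compatible with only a small
fraction of the expanding graphs. Each of the at least `9/10 * 2 d T` unique neighbours of the pairs
costs `q` a factor `2`, since `choose(m, m/2) ≤ 2 ^ (m - 1)` for `m ≥ 1`, while the lower bound for
`p` falls short of `2 ^ λ` by at most `2 ^ (d T)`. -/
lemma medium_bound (p q : V → Fin k) (a : Fin k → Fin k → ℕ) (n d L T : ℕ)
    (hd : ∀ i, ∑ j, a i j = d) (hT1 : 1 ≤ T) (hLT : L * (d * (2 * T)) ≤ n) (hs : Split p q T) :
    (2 : ℝ) ^ (d * T / 2) * #((Gs p a).filter fun G => Cmp q a G ∧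
      Expand (fun _ _ => True) univ d L n G) ≤ #(Gs p a) := by
  obtain ⟨j, l, l', hl, h1, h2⟩ := hs
  obtain ⟨e, hp, hq⟩ := exists_pairs (ι := Fin T) p q T (by simp) j l l' hl h1 h2
  set Y : Finset V := (univ ×ˢ univ : Finset (Fin T × Bool)).map e with hY
  have hYc : #Y = 2 * T := by
    rw [hY, card_map, card_product]; simp [mul_comm]
  have hmY : ∀ z, e z ∈ Y := fun z => mem_map_of_mem _ (by simp)
  refine rewire p q a e Yᶜ (fun z => by simp [hmY]) (fun t => by rw [hp, hp]) l l' hl hq _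
    (fun G hG => ⟨(mem_filter.1 (mem_filter.1 hG).1).2, (mem_filter.1 hG).2.1⟩) _ (by positivity) ?_
  intro G hG
  obtain ⟨hG, hGq, hE⟩ := mem_filter.1 hG
  have hGp : Cmp p a G := (mem_filter.1 hG).2
  have hYn : Y.Nonempty := by rw [← card_pos]; omega
  have hU := hE Y (subset_univ _) hYn (by rw [hYc]; exact hLT)
  rw [hYc] at hU
  -- the set of vertices that see exactly one vertex of some pair
  set W := univ.filter fun u => 1 ≤ #(LamU e Yᶜ G u) with hW
  have hUW : #(Uniq (fun _ _ => True) G Y) ≤ #W := by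
    refine card_le_card fun u hu => ?_
    have huY : u ∉ Y := (mem_filter.1 hu).2.1
    obtain ⟨t, _, ht⟩ := uniq_pos (fun _ _ => True) e Yᶜ G univ (fun _ _ _ _ _ => trivial) u
      (mem_compl.2 huY) hu
    exact mem_filter.2 ⟨mem_univ _, card_pos.2 ⟨t, mem_filter.2 ⟨mem_univ _, ht⟩⟩⟩
  have hsum := sum_LamU e Yᶜ p G
  have hup : ∏ u : V, (#(LamU e Yᶜ G u)).choose (#(LamU e Yᶜ G u) / 2) ≤
      2 ^ ∑ u : V, (#(LamU e Yᶜ G u) - 1) := by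
    rw [← prod_pow_eq_pow_sum]
    exact prod_le_prod' fun u _ => choose_half_le _
  have hup2 : ∑ u : V, (#(LamU e Yᶜ G u) - 1) + #W = ∑ u : V, #(LamU e Yᶜ G u) := by
    rw [hW, card_filter, ← sum_add_distrib]
    refine sum_congr rfl fun u _ => ?_
    split_ifs <;> omega
  set mn : Fin T → Fin k → ℕ := fun t i =>
    min (hT e Yᶜ p G t i) (#(LamT e Yᶜ p G t i) - hT e Yᶜ p G t i) with hmn
  have hle : ∀ t i, hT e Yᶜ p G t i ≤ #(LamT e Yᶜ p G t i) := fun t i => card_filter_le _ _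
  have hlow : 2 ^ (∑ t, ∑ i, mn t i) ≤
      ∏ t : Fin T, ∏ i : Fin k, (#(LamT e Yᶜ p G t i)).choose (hT e Yᶜ p G t i) := by
    rw [← prod_pow_eq_pow_sum]
    refine prod_le_prod' fun t _ => ?_
    rw [← prod_pow_eq_pow_sum]
    refine prod_le_prod' fun i _ => ?_
    have := two_pow_le_choose (hT e Yᶜ p G t i) (#(LamT e Yᶜ p G t i) - hT e Yᶜ p G t i)
    rwa [Nat.add_sub_cancel' (hle t i)] at this
  have hlow2 : ∑ t, ∑ i, #(LamT e Yᶜ p G t i) ≤ ∑ t, ∑ i, mn t i + d * T := by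
    have : ∑ t : Fin T, ∑ i, #(LamT e Yᶜ p G t i) ≤ ∑ t : Fin T, ∑ i, (mn t i + a j i) := by
      refine sum_le_sum fun t _ => sum_le_sum fun i _ => ?_
      have c1 := hT_le e Yᶜ p a G hGp t i
      have c2 := hT_le' e Yᶜ p a G hGp t i
      rw [hp] at c1 c2
      simp only [hmn]
      omega
    simp only [sum_add_distrib, hd, sum_const, card_univ, Fintype.card_fin, smul_eq_mul] at this
    rw [mul_comm T d] at this
    exact this
  have hfin : d * T / 2 + ∑ u : V, (#(LamU e Yᶜ G u) - 1) ≤ ∑ t, ∑ i, mn t i := by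
    have h5 : d * (2 * T) = 2 * (d * T) := by ring
    rw [h5] at hU
    omega
  have : 2 ^ (d * T / 2) * ∏ u : V, (#(LamU e Yᶜ G u)).choose (#(LamU e Yᶜ G u) / 2) ≤
      ∏ t : Fin T, ∏ i : Fin k, (#(LamT e Yᶜ p G t i)).choose (hT e Yᶜ p G t i) := by
    refine (Nat.mul_le_mul_left _ hup).trans (le_trans ?_ hlow)
    rw [← pow_add]
    exact Nat.pow_le_pow_right (by norm_num) hfin
  exact_mod_cast this

end RSBM

/-! ### Far partitions -/

namespace RSBM
open Finset
open scoped Classical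

variable {V : Type} [Fintype V] {k : ℕ} {ι : Type} [Fintype ι]

/-- A form of `centralBinom m ≤ 4 ^ m / √(2 m + 1)` in the natural numbers. -/
lemma centralBinom_sq (m : ℕ) : (2 * m + 1) * m.centralBinom ^ 2 ≤ 16 ^ m := by
  induction m with
  | zero => simp
  | succ m ih =>
    have h := Nat.succ_mul_centralBinom_succ m
    have h2 : 0 < (m + 1) ^ 2 := by positivity
    refine Nat.le_of_mul_le_mul_left ?_ h2
    calc (m + 1) ^ 2 * ((2 * (m + 1) + 1) * (m + 1).centralBinom ^ 2)
        = (2 * m + 3) * ((m + 1) * (m + 1).centralBinom) ^ 2 := by ring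
      _ = 4 * ((2 * m + 3) * (2 * m + 1)) * ((2 * m + 1) * m.centralBinom ^ 2) := by rw [h]; ring
      _ ≤ 4 * (4 * (m + 1) ^ 2) * 16 ^ m := by
          refine Nat.mul_le_mul (Nat.mul_le_mul_left _ ?_) ih
          nlinarith
      _ = (m + 1) ^ 2 * 16 ^ (m + 1) := by ring

lemma choose_half_sq (t : ℕ) : t.choose (t / 2) ^ 2 * t ≤ 4 ^ t := by
  rcases Nat.even_or_odd' t with ⟨m, rfl | rfl⟩
  · rw [Nat.mul_div_cancel_left _ (by norm_num), ← Nat.centralBinom, pow_mul]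
    have := centralBinom_sq m
    norm_num
    nlinarith
  · have h1 : (2 * m + 1) / 2 = m := by omega
    rw [h1]
    have h2 : (m + 1).centralBinom = 2 * (2 * m + 1).choose m := by
      rw [Nat.centralBinom, show 2 * (m + 1) = (2 * m + 1) + 1 by ring, Nat.choose_succ_succ,
        Nat.succ_eq_add_one, Nat.choose_symm_half]
      ring
    have h3 := centralBinom_sq (m + 1)
    rw [h2] at h3
    have h4 : 4 ^ (2 * m + 1) * 4 = 16 ^ (m + 1) := by
      rw [← pow_succ, show 2 * m + 1 + 1 = 2 * (m + 1) by ring, pow_mul]; norm_num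
    nlinarith

/-- The square of a central binomial coefficient is smaller than that of `2 ^ t` by a factor `θ`, once
`θ ≤ t`. -/
lemma choose_half_weight (θ t : ℕ) (hθ : 1 ≤ θ) :
    t.choose (t / 2) ^ 2 * (if θ ≤ t then θ else 1) ≤ 4 ^ t := by
  have h1 := choose_half_sq t
  split_ifs with h
  · exact (Nat.mul_le_mul_left _ h).trans h1
  · rcases Nat.eq_zero_or_pos t with rfl | ht
    · simp
    · exact (Nat.mul_le_mul_left _ ht).trans h1

/-- The edges between cluster `i` and cluster `j`: the relation holds if one end lies in each. -/
def blk (p : V → Fin k) (i j : Fin k) (u v : V) : Prop := (p u = i ∧ p v = j) ∨ (p u = j ∧ p v = i)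

/-- Inside one cluster the two vertices of a pair have equally many private neighbours. -/
lemma LamT_two (e : ι × Bool ↪ V) (p : V → Fin k) (a : Fin k → Fin k → ℕ)
    (G : SimpleGraph V) (hG : Cmp p a G) (i j : Fin k) (hp : ∀ z, p (e z) = j) (t : ι) :
    #(LamT e (univ.filter fun v => p v = i) p G t i) =
      2 * hT e (univ.filter fun v => p v = i) p G t i := by
  set X := univ.filter fun v => p v = i with hX
  have hXm : ∀ u, u ∈ X ↔ p u = i := by simp [hX]
  have e1 := card_filter_add_card_filter_not (s := nbc p G (e (t, true)) i)
    (fun u => isL e X G t u)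
  have e2 := card_filter_add_card_filter_not (s := nbc p G (e (t, false)) i)
    (fun u => isL e X G t u)
  have e3 := card_filter_add_card_filter_not (s := LamT e X p G t i)
    (fun u => G.Adj (e (t, true)) u)
  rw [hG, hp] at e1 e2
  have f1 : (nbc p G (e (t, true)) i).filter (fun u => isL e X G t u) =
      (LamT e X p G t i).filter fun u => G.Adj (e (t, true)) u := by
    ext u
    simp only [mem_filter, mem_nbc, LamT, mem_univ, true_and]
    tauto
  have f2 : (nbc p G (e (t, false)) i).filter (fun u => isL e X G t u) =
      (LamT e X p G t i).filter fun u => ¬ G.Adj (e (t, true)) u := by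
    ext u
    simp only [mem_filter, mem_nbc, LamT, mem_univ, true_and, isL, hXm]
    tauto
  have f3 : (nbc p G (e (t, true)) i).filter (fun u => ¬ isL e X G t u) =
      (nbc p G (e (t, false)) i).filter fun u => ¬ isL e X G t u := by
    ext u
    simp only [mem_filter, mem_nbc, isL, hXm]
    tauto
  rw [f1, f3] at e1
  rw [f2] at e2
  unfold hT
  omega

/-- With `X` a single cluster, the lower bound of `fibre_lower` loses only a polynomial factor per
pair, because the two vertices of a pair have equally many private neighbours. -/
lemma LamT_lower (e : ι × Bool ↪ V) (p : V → Fin k) (a : Fin k → Fin k → ℕ)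
    (G : SimpleGraph V) (hG : Cmp p a G) (i j : Fin k) (hp : ∀ z, p (e z) = j) (t : ι) :
    2 ^ (∑ i', #(LamT e (univ.filter fun v => p v = i) p G t i')) ≤ (2 * a j i + 1) *
      ∏ i', (#(LamT e (univ.filter fun v => p v = i) p G t i')).choose
        (hT e (univ.filter fun v => p v = i) p G t i') := by
  have hempty : ∀ i' ≠ i, LamT e (univ.filter fun v => p v = i) p G t i' = ∅ := by
    intro i' hi'
    rw [LamT, filter_eq_empty_iff]
    rintro u _ ⟨h1, h2, _⟩
    exact hi' (h1.symm.trans (mem_filter.1 h2).2)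
  rw [Fintype.sum_eq_single i fun i' hi' => by rw [hempty i' hi', card_empty],
    Fintype.prod_eq_single i fun i' hi' => by rw [hT, hempty i' hi']; simp,
    LamT_two e p a G hG i j hp t]
  have hA := hT_le e (univ.filter fun v => p v = i) p a G hG t i
  rw [hp] at hA
  rw [pow_mul, ← Nat.centralBinom]
  norm_num
  rcases Nat.eq_zero_or_pos (hT e (univ.filter fun v => p v = i) p G t i) with h | h
  · rw [h]; simp
  · refine (Nat.four_pow_le_two_mul_self_mul_centralBinom _ h).trans ?_
    exact Nat.mul_le_mul_right _ (by omega)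

/-- Partitions far from `p`: each of them is compatible with an exponentially small fraction of the
graphs that expand between any two clusters. Only adjacencies between the cluster `j` containing the
pairs and one other cluster `i` are rewired. There are `R` batches of `T0` pairs, each batch having
at least `n / (3 L)` unique neighbours in cluster `i`; hence at least `n / (6 L)` vertices see `θ`
pairs or more, and each of them gains a factor `√θ` by `choose_half_weight`. -/
lemma far_bound (p q : V → Fin k) (a : Fin k → Fin k → ℕ) (hsym : ∀ i j, a i j = a j i)
    (hpos : ∀ i j, 0 < a i j) (n L θ T : ℕ) (hk : 2 ≤ k)
    (hn : ∀ i, #(univ.filter fun v => p v = i) = n) (hL : 1 ≤ L)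
    (hθ : θ = (8 * k ^ (2 * k)) ^ (6 * L))
    (hA : ∀ i j, (2 * a i j + 1) ^ (6 * θ) ≤ 2 ^ a i j)
    (hTle : ∀ i j, (6 * L * θ) * (n / (2 * L * a i j)) ≤ T)
    (hn4 : ∀ i j, 4 * L * a i j ≤ n) (hs : Split p q T) :
    ((2 * k ^ k) ^ n : ℝ) * #((Gs p a).filter fun G => Cmp q a G ∧
      ∀ i j, i ≠ j → Expand (blk p i j) (univ.filter fun v => p v = j) (a i j) L n G) ≤
      #(Gs p a) := by
  obtain ⟨j, l, l', hl, h1, h2⟩ := hs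
  obtain ⟨i, hij⟩ : ∃ i : Fin k, i ≠ j := by
    have : Nontrivial (Fin k) := Fin.nontrivial_iff_two_le.2 hk
    exact exists_ne j
  set A := a i j with hAdef
  have hA0 : 0 < A := hpos i j
  set T0 := n / (2 * L * A) with hT0
  set R := 6 * L * θ with hR
  have hθ1 : 1 ≤ θ := by
    rw [hθ]; apply Nat.one_le_pow; positivity
  obtain ⟨e, hp, hq⟩ := exists_pairs (ι := Fin R × Fin T0) p q T (by simpa using hTle i j)
    j l l' hl h1 h2
  set X := univ.filter fun v => p v = i with hX
  have hXm : ∀ u, u ∈ X ↔ p u = i := by simp [hX]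
  refine rewire p q a e X (fun z => by rw [hXm, hp]; exact hij.symm) (fun t => by rw [hp, hp])
    l l' hl hq _ (fun G hG => ⟨(mem_filter.1 (mem_filter.1 hG).1).2, (mem_filter.1 hG).2.1⟩) _
    (by positivity) ?_
  intro G hG
  obtain ⟨hG, hGq, hE⟩ := mem_filter.1 hG
  have hGp : Cmp p a G := (mem_filter.1 hG).2
  have hE := hE i j hij
  rw [← hAdef] at hE
  have hT0n : 2 * L * A * T0 ≤ n := Nat.mul_div_le _ _
  have hT0n' : n ≤ 4 * L * A * T0 := by
    have h3 : n < 2 * L * A * (T0 + 1) := Nat.lt_mul_div_succ _ (by positivity)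
    have h4 := hn4 i j
    rw [← hAdef] at h4
    have e1 : 2 * L * A * (T0 + 1) = 2 * (L * A * T0) + 2 * (L * A) := by ring
    have e2 : 4 * L * A * T0 = 4 * (L * A * T0) := by ring
    have e3 : 4 * L * A = 4 * (L * A) := by ring
    omega
  have hn0 : 0 < n := by
    have := hn4 i j
    have : 0 < 4 * L * a i j := by positivity
    omega
  have hT01 : 1 ≤ T0 := by
    rcases Nat.eq_zero_or_pos T0 with h | h
    · rw [h] at hT0n'; omega
    · exact h
  -- the batches of pairs
  set I : Fin R → Finset (Fin R × Fin T0) := fun r => {r} ×ˢ univ with hI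
  set W : Fin R → Finset V := fun r => Uniq (blk p i j) G ((I r ×ˢ univ).map e) with hW
  have hWX : ∀ r, ∀ u ∈ W r, u ∈ X := by
    intro r u hu
    simp only [hW, Uniq, mem_filter, mem_univ, true_and] at hu
    obtain ⟨v, hv⟩ := card_eq_one.1 hu.2
    have hv' : v ∈ ({v} : Finset V) := mem_singleton_self v
    rw [← hv, mem_filter, Finset.mem_map] at hv'
    obtain ⟨⟨z, _, rfl⟩, hb, _⟩ := hv'
    rw [hXm]
    rcases hb with hb | hb
    · exact absurd (hb.1.symm.trans (hp z)) hij
    · exact hb.2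
  have hWn : ∀ r, n ≤ 3 * L * #(W r) := by
    intro r
    have hc : #((I r ×ˢ univ).map e) = 2 * T0 := by
      rw [card_map, card_product, hI, card_product]; simp [mul_comm]
    have := hE ((I r ×ˢ univ).map e) ?_ ?_ ?_
    · rw [hc] at this
      have e1 : 9 * (A * (2 * T0)) = 18 * (A * T0) := by ring
      rw [e1] at this
      have e2 : L * (18 * (A * T0)) ≤ L * (10 * #(W r)) := Nat.mul_le_mul_left _ this
      have e3 : 4 * L * A * T0 = 4 * (L * (A * T0)) := by ring
      have e4 : L * (18 * (A * T0)) = 18 * (L * (A * T0)) := by ring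
      have e5 : L * (10 * #(W r)) = 10 * (L * #(W r)) := by ring
      have e6 : 3 * L * #(W r) = 3 * (L * #(W r)) := by ring
      omega
    · intro v hv
      obtain ⟨z, _, rfl⟩ := Finset.mem_map.1 hv
      simp [hp]
    · rw [← card_pos, hc]; omega
    · rw [hc]
      refine le_trans (le_of_eq ?_) hT0n
      ring
  -- a unique neighbour of a batch sees some pair of the batch privately
  have htu : ∀ u, #(univ.filter fun r => u ∈ W r) ≤ #(LamU e X G u) := by
    intro u
    refine (card_le_card (t := (LamU e X G u).image Prod.fst) fun r hr => ?_).trans card_image_le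
    have hr := (mem_filter.1 hr).2
    obtain ⟨t, ht, hL⟩ := uniq_pos (blk p i j) e X G (I r)
      (fun t _ s u hu => Or.inr ⟨hp _, (hXm u).1 hu⟩) u (hWX r u hr) hr
    refine mem_image.2 ⟨t, mem_filter.2 ⟨mem_univ _, hL⟩, ?_⟩
    exact mem_singleton.1 (mem_product.1 ht).1
  -- by double counting, many vertices see at least `θ` pairs privately
  set U := univ.filter fun u => θ ≤ #(LamU e X G u) with hU
  have hUn : n ≤ 6 * L * #U := by
    have c1 : ∑ r, #(W r) = ∑ u ∈ X, #(univ.filter fun r => u ∈ W r) := by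
      have : ∀ r, #(W r) = ∑ u ∈ X, if u ∈ W r then 1 else 0 := by
        intro r
        rw [← card_filter]
        congr 1; ext u; rw [mem_filter]
        exact ⟨fun h => ⟨hWX r u h, h⟩, fun h => h.2⟩
      simp only [this]
      rw [sum_comm]
      refine sum_congr rfl fun u _ => ?_
      rw [card_filter]
    have c2 : ∑ u ∈ X, #(univ.filter fun r => u ∈ W r) ≤ ∑ u ∈ X, (θ + if u ∈ U then R else 0) := by
      refine sum_le_sum fun u _ => ?_
      by_cases h : u ∈ U
      · rw [if_pos h]
        have := card_filter_le (univ : Finset (Fin R)) (fun r => u ∈ W r)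
        rw [card_univ, Fintype.card_fin] at this
        omega
      · rw [if_neg h]
        have h3 := htu u
        have h4 : ¬ θ ≤ #(LamU e X G u) := fun h' => h (mem_filter.2 ⟨mem_univ _, h'⟩)
        omega
    rw [sum_add_distrib, sum_const, hX, hn, ← hX, ← sum_filter, sum_const, smul_eq_mul,
      smul_eq_mul] at c2
    have c3 : #(X.filter fun u => u ∈ U) ≤ #U := card_le_card fun u hu => (mem_filter.1 hu).2
    have c4 : R * n ≤ 3 * L * ∑ r, #(W r) := by
      rw [mul_sum]
      refine le_trans ?_ (sum_le_sum fun r _ => hWn r)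
      simp
    have c5 : R * n ≤ 3 * L * (n * θ + #U * R) := by
      refine c4.trans (Nat.mul_le_mul_left _ ?_)
      rw [c1]
      exact c2.trans (Nat.add_le_add_left (Nat.mul_le_mul_right _ c3) _)
    have c6 : (3 * L * θ) * n ≤ (3 * L * θ) * (6 * L * #U) := by
      rw [hR] at c5
      have : 6 * L * θ * n = 3 * L * (n * θ) + 3 * L * θ * n := by ring
      have : 3 * L * (n * θ + #U * (6 * L * θ)) = 3 * L * (n * θ) + (3 * L * θ) * (6 * L * #U) := by
        ring
      omega
    exact Nat.le_of_mul_le_mul_left c6 (by positivity)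
  set lam := ∑ u : V, #(LamU e X G u) with hlam
  set P := ∏ u : V, (#(LamU e X G u)).choose (#(LamU e X G u) / 2) with hP
  set Q := ∏ t : Fin R × Fin T0, ∏ i : Fin k, (#(LamT e X p G t i)).choose (hT e X p G t i) with hQ
  have s1 : P ^ 2 * θ ^ #U ≤ 4 ^ lam := by
    have : θ ^ #U = ∏ u : V, if θ ≤ #(LamU e X G u) then θ else 1 := by
      rw [hU, ← prod_const, prod_filter]
    rw [this, hP, ← prod_pow, ← prod_mul_distrib, hlam, ← prod_pow_eq_pow_sum]
    exact prod_le_prod' fun u _ => choose_half_weight _ _ hθ1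
  have s2 : 2 ^ lam ≤ (2 * A + 1) ^ (R * T0) * Q := by
    rw [hlam, sum_LamU e X p G, ← prod_pow_eq_pow_sum]
    have : (2 * A + 1) ^ (R * T0) = ∏ t : Fin R × Fin T0, (2 * A + 1) := by simp
    rw [this, hQ, ← prod_mul_distrib]
    refine prod_le_prod' fun t _ => ?_
    have := LamT_lower e p a G hGp i j hp t
    rwa [hsym j i] at this
  -- `θ` is chosen so that `n / (6 L)` vertices suffice
  have s3 : (8 * k ^ (2 * k)) ^ n ≤ θ ^ #U := by
    rw [hθ, ← pow_mul]
    exact Nat.pow_le_pow_right (by positivity) hUn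
  -- the polynomial loss per pair is affordable because the pairs number only `O(θ n / A)`
  have s4 : (2 * A + 1) ^ (2 * (R * T0)) ≤ 2 ^ n := by
    rw [← Nat.pow_le_pow_iff_left hA0.ne', ← pow_mul, ← pow_mul]
    calc (2 * A + 1) ^ (2 * (R * T0) * A) ≤ (2 * A + 1) ^ ((6 * θ) * n) := by
          refine Nat.pow_le_pow_right (by positivity) ?_
          calc 2 * (R * T0) * A = 6 * θ * (2 * L * A * T0) := by rw [hR]; ring
            _ ≤ 6 * θ * n := Nat.mul_le_mul_left _ hT0n
      _ = ((2 * A + 1) ^ (6 * θ)) ^ n := pow_mul _ _ _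
      _ ≤ (2 ^ A) ^ n := Nat.pow_le_pow_left (hA i j) n
      _ = 2 ^ (n * A) := by rw [← pow_mul, mul_comm]
  have fin : (2 * k ^ k) ^ n * P ≤ Q := by
    rw [← Nat.pow_le_pow_iff_left two_ne_zero]
    refine Nat.le_of_mul_le_mul_left ?_ (show 0 < 2 ^ n by positivity)
    calc 2 ^ n * ((2 * k ^ k) ^ n * P) ^ 2 = P ^ 2 * (8 * k ^ (2 * k)) ^ n := by
          have h8 : 8 * k ^ (2 * k) = 2 * (2 * k ^ k) ^ 2 := by ring
          rw [h8, mul_pow 2 ((2 * k ^ k) ^ 2), ← pow_mul, mul_comm 2 n, pow_mul]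
          generalize (2 * k ^ k) ^ n = x
          ring
      _ ≤ P ^ 2 * θ ^ #U := Nat.mul_le_mul_left _ s3
      _ ≤ 4 ^ lam := s1
      _ = (2 ^ lam) ^ 2 := by rw [← pow_mul, mul_comm, pow_mul]; norm_num
      _ ≤ ((2 * A + 1) ^ (R * T0) * Q) ^ 2 := Nat.pow_le_pow_left s2 2
      _ = (2 * A + 1) ^ (2 * (R * T0)) * Q ^ 2 := by ring
      _ ≤ 2 ^ n * Q ^ 2 := Nat.mul_le_mul_right _ s4
  have fin' : (((2 * k ^ k) ^ n * P : ℕ) : ℝ) ≤ (Q : ℝ) := by exact_mod_cast fin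
  refine le_trans (le_of_eq ?_) fin'
  push_cast
  ring

end RSBM

/-! ### The union bound over partitions -/

namespace RSBM
open Finset
open scoped Classical

variable {V : Type} [Fintype V] {k : ℕ}

/-- Counting the colourings within distance `D` of `q0`, with a weight `X` for every vertex at which
the colouring agrees with `q0`. -/
lemma near_card (q0 : V → Fin k) (D X : ℕ) (hX : 1 ≤ X) :
    (#(univ.filter fun q : V → Fin k => #(univ.filter fun v => q v ≠ q0 v) ≤ D) : ℝ) ≤
      (X : ℝ) ^ D * Real.exp (k * Fintype.card V / X) := by
  have h1 : ∑ q : V → Fin k, ∏ v, (if q v = q0 v then X else 1) ≤ (X + k) ^ Fintype.card V := by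
    have := prod_univ_sum (fun _ : V => (univ : Finset (Fin k)))
      (fun v c => if c = q0 v then X else 1)
    rw [Fintype.piFinset_univ] at this
    rw [← this, ← card_univ, ← prod_const]
    refine prod_le_prod' fun v _ => ?_
    calc ∑ c : Fin k, (if c = q0 v then X else 1) ≤ ∑ c : Fin k, ((if c = q0 v then X else 0) + 1) :=
          sum_le_sum fun c _ => by split_ifs <;> omega
      _ = X + k := by rw [sum_add_distrib]; simp
  have h2 : X ^ Fintype.card V *
      #(univ.filter fun q : V → Fin k => #(univ.filter fun v => q v ≠ q0 v) ≤ D) ≤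
      X ^ D * (X + k) ^ Fintype.card V := by
    refine le_trans ?_ (Nat.mul_le_mul_left _ h1)
    rw [mul_comm, ← smul_eq_mul, ← sum_const, mul_sum]
    refine (sum_le_sum fun q hq => ?_).trans (sum_le_sum_of_subset (subset_univ _))
    have hq := (mem_filter.1 hq).2
    rw [prod_ite, prod_const, prod_const, one_pow, mul_one, ← pow_add]
    refine Nat.pow_le_pow_right hX ?_
    have := card_filter_add_card_filter_not (s := (univ : Finset V)) (fun v => q v = q0 v)
    rw [card_univ] at this
    rw [← this]
    simp only [ne_eq] at hq
    omega
  have hX0 : (0 : ℝ) < X := by exact_mod_cast hX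
  have h3 : (X : ℝ) ^ Fintype.card V *
      #(univ.filter fun q : V → Fin k => #(univ.filter fun v => q v ≠ q0 v) ≤ D) ≤
      X ^ D * (X + k) ^ Fintype.card V := by exact_mod_cast h2
  -- `(1 + k / X) ^ |V| ≤ exp (k |V| / X)`
  have h4 : ((X : ℝ) + k) ^ Fintype.card V ≤
      X ^ Fintype.card V * Real.exp (k * Fintype.card V / X) := by
    have : (k : ℝ) * Fintype.card V / X = Fintype.card V * (k / X) := by ring
    rw [this, Real.exp_nat_mul, ← mul_pow]
    refine pow_le_pow_left₀ (by positivity) ?_ _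
    have := Real.add_one_le_exp ((k : ℝ) / X)
    calc (X : ℝ) + k = X * (k / X + 1) := by field_simp; ring
      _ ≤ _ := mul_le_mul_of_nonneg_left this hX0.le
  refine le_of_mul_le_mul_left (h3.trans ((mul_le_mul_of_nonneg_left h4 (by positivity)).trans
    (le_of_eq ?_))) (show (0 : ℝ) < X ^ Fintype.card V by positivity)
  ring

/-- The colourings that agree with `p`, up to renaming the colours, outside `D` vertices. -/
noncomputable def Qnear (p : V → Fin k) (D : ℕ) : Finset (V → Fin k) :=
  univ.filter fun q => ∃ σ : Equiv.Perm (Fin k), #(univ.filter fun v => q v ≠ σ (p v)) ≤ D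

/-- The bound of `near_card`, summed over the relabellings of `p`. -/
lemma Qnear_card (p : V → Fin k) (D X : ℕ) (hX : 1 ≤ X) :
    (#(Qnear p D) : ℝ) ≤
      (k.factorial : ℝ) * ((X : ℝ) ^ D * Real.exp (k * Fintype.card V / X)) := by
  have h : Qnear p D ⊆ univ.biUnion fun σ : Equiv.Perm (Fin k) =>
      univ.filter fun q : V → Fin k => #(univ.filter fun v => q v ≠ σ (p v)) ≤ D := by
    intro q hq
    simpa [Qnear] using hq
  have h2 : (#(Qnear p D) : ℝ) ≤ ∑ σ : Equiv.Perm (Fin k),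
      (#(univ.filter fun q : V → Fin k => #(univ.filter fun v => q v ≠ σ (p v)) ≤ D) : ℝ) := by
    exact_mod_cast (card_le_card h).trans card_biUnion_le
  refine h2.trans ((sum_le_sum fun σ _ => near_card (fun v => σ (p v)) D X hX).trans ?_)
  rw [sum_const, card_univ, Fintype.card_perm, Fintype.card_fin, nsmul_eq_mul]

lemma expand_whole (p : V → Fin k) (a : Fin k → Fin k → ℕ) (hsym : ∀ i j, a i j = a j i)
    (n d : ℕ) (hpos : ∀ i j, 0 < a i j) (hd : ∀ i, ∑ j, a i j = d) (h40 : 40 ≤ d)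
    (hn : ∀ i, #(univ.filter fun v => p v = i) = n) :
    (#((Gs p a).filter fun G => ¬ Expand (fun _ _ => True) univ d (expL k) n G) : ℝ) ≤
      #(Gs p a) * (Real.exp (40 * (2 * k + 11)) / n) := by
  refine expand_count p a hsym n d hn hpos (fun _ _ => True) (fun u v _ => ?_) (by simp) univ
    (fun G hG v _ => ?_) h40
  · rw [← hd (p u)]
    exact single_le_sum (f := a (p u)) (fun _ _ => Nat.zero_le _) (mem_univ (p v))
  · simpa using card_nbrs p a d hd G hG v

lemma expand_blk (p : V → Fin k) (a : Fin k → Fin k → ℕ) (hsym : ∀ i j, a i j = a j i)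
    (n : ℕ) (hpos : ∀ i j, 0 < a i j) (i j : Fin k) (hij : i ≠ j) (h40 : 40 ≤ a i j)
    (hn : ∀ i, #(univ.filter fun v => p v = i) = n) :
    (#((Gs p a).filter fun G =>
      ¬ Expand (blk p i j) (univ.filter fun v => p v = j) (a i j) (expL k) n G) : ℝ) ≤
      #(Gs p a) * (Real.exp (40 * (2 * k + 11)) / n) := by
  refine expand_count p a hsym n (a i j) hn hpos (blk p i j) ?_ ?_ _ (fun G hG v hv => ?_) h40
  · rintro u v (⟨h1, h2⟩ | ⟨h1, h2⟩)
    · rw [h1, h2]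
    · rw [h1, h2, hsym]
  · unfold blk; intros; tauto
  · have hv := (mem_filter.1 hv).2
    have hb : ∀ u, blk p i j v u ↔ p u = i := by
      intro u
      simp only [blk, hv, true_and]
      exact ⟨fun h => h.resolve_left fun h' => hij h'.1.symm, Or.inr⟩
    have := hG v i
    rw [hv, ← hsym i j] at this
    rw [← this]
    congr 1
    ext u
    rw [mem_nbc, mem_filter, hb]
    simp

/-- `G` is compatible with an equipartition that is not `p` up to renaming the clusters. -/
def Bad (p : V → Fin k) (a : Fin k → Fin k → ℕ) (n : ℕ) (G : SimpleGraph V) : Prop :=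
  ∃ q : V → Fin k, (∀ i, #(univ.filter fun v => q v = i) = n) ∧ Cmp q a G ∧
    ¬ ∃ σ : Equiv.Perm (Fin k), ∀ v, q v = σ (p v)

/-- The union bound: a bad graph fails to expand as a whole, or fails to expand between two clusters,
or is compatible with a partition at an intermediate distance (split at scale `Ta` and within
`k * k * Tb` of a relabelling of `p`), or is compatible with a partition far from `p` (split at
scale `Tb`). -/
lemma bad_count (p : V → Fin k) (a : Fin k → Fin k → ℕ) (hsym : ∀ i j, a i j = a j i)
    (hpos : ∀ i j, 0 < a i j) (n d θ Ta Tb : ℕ) (hd : ∀ i, ∑ j, a i j = d) (hk : 2 ≤ k)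
    (hn : ∀ i, #(univ.filter fun v => p v = i) = n) (h40 : ∀ i j, 40 ≤ a i j)
    (hθ : θ = (8 * k ^ (2 * k)) ^ (6 * expL k))
    (hA : ∀ i j, (2 * a i j + 1) ^ (6 * θ) ≤ 2 ^ a i j)
    (hTle : ∀ i j, (6 * expL k * θ) * (n / (2 * expL k * a i j)) ≤ Tb)
    (hn4 : ∀ i j, 4 * expL k * a i j ≤ n) (hTa1 : 1 ≤ Ta)
    (hTa : expL k * (d * (k * k * Ta)) ≤ n) (hTb : 2 * (k * Tb) < n) :
    (#((Gs p a).filter (Bad p a n)) : ℝ) ≤ #(Gs p a) *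
      ((1 + k * k) * (Real.exp (40 * (2 * k + 11)) / n) + #(Qnear p (k * k * Tb)) / 2 ^ (d * Ta / 2)
        + (1 / 2) ^ n) := by
  set L := expL k with hLdef
  have hL16 : 16 ≤ L := expL_large k
  set β : ℝ := Real.exp (40 * (2 * k + 11)) / n with hβ
  have h40d : 40 ≤ d := by
    have i0 : Fin k := ⟨0, by omega⟩
    rw [← hd i0]
    exact (h40 i0 i0).trans (single_le_sum (f := a i0) (fun _ _ => Nat.zero_le _) (mem_univ i0))
  have hk2 : 4 ≤ k * k := Nat.mul_le_mul hk hk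
  have hkTa : 2 * (k * Ta) < n := by
    refine lt_of_lt_of_le ?_ hTa
    have : k * Ta ≤ k * k * Ta := Nat.mul_le_mul_right _ (Nat.le_mul_self k)
    have h1 : d * (k * k * Ta) ≥ 40 * (k * k * Ta) := Nat.mul_le_mul_right _ h40d
    have h2 : L * (d * (k * k * Ta)) ≥ 16 * (d * (k * k * Ta)) := Nat.mul_le_mul_right _ hL16
    have : 1 ≤ k * Ta := Nat.mul_pos (by omega) hTa1
    omega
  have hTa2 : L * (d * (2 * Ta)) ≤ n := by
    refine le_trans ?_ hTa
    gcongr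
    omega
  set B1 := (Gs p a).filter fun G => ¬ Expand (fun _ _ => True) univ d L n G with hB1
  set B1' : Fin k × Fin k → Finset (SimpleGraph V) := fun x => if x.1 = x.2 then ∅ else
    (Gs p a).filter fun G =>
      ¬ Expand (blk p x.1 x.2) (univ.filter fun v => p v = x.2) (a x.1 x.2) L n G with hB1'
  set B2 : (V → Fin k) → Finset (SimpleGraph V) := fun q => if Split p q Ta then
    (Gs p a).filter fun G => Cmp q a G ∧ Expand (fun _ _ => True) univ d L n G else ∅ with hB2
  set B3 : (V → Fin k) → Finset (SimpleGraph V) := fun q => if Split p q Tb then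
    (Gs p a).filter fun G => Cmp q a G ∧
      ∀ i j, i ≠ j → Expand (blk p i j) (univ.filter fun v => p v = j) (a i j) L n G else ∅
    with hB3
  have hsub : (Gs p a).filter (Bad p a n) ⊆ ((B1 ∪ univ.biUnion B1') ∪
      (Qnear p (k * k * Tb)).biUnion B2) ∪ univ.biUnion B3 := by
    intro G hG
    obtain ⟨hG, q, hqn, hq, hne⟩ := mem_filter.1 hG
    have hGp : Cmp p a G := (mem_filter.1 hG).2
    by_cases e1 : Expand (fun _ _ => True) univ d L n G
    swap
    · exact mem_union_left _ (mem_union_left _ (mem_union_left _ (mem_filter.2 ⟨hG, e1⟩)))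
    by_cases e2 : ∀ i j, i ≠ j → Expand (blk p i j) (univ.filter fun v => p v = j) (a i j) L n G
    swap
    · push Not at e2
      obtain ⟨i, j, hij, e2⟩ := e2
      refine mem_union_left _ (mem_union_left _ (mem_union_right _ (mem_biUnion.2
        ⟨(i, j), mem_univ _, ?_⟩)))
      simp only [hB1']
      rw [if_neg hij]
      exact mem_filter.2 ⟨hG, e2⟩
    rcases near_or_split p q n Ta hn hqn hkTa with hs | ⟨σ, hσ⟩
    swap
    · exact absurd ⟨σ, near_eq p q a n d L hd hn (by omega) (by omega) G hGp hq e1 σ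
        (le_trans (by gcongr) hTa)⟩ hne
    rcases near_or_split p q n Tb hn hqn hTb with hs' | hσ
    · refine mem_union_right _ (mem_biUnion.2 ⟨q, mem_univ _, ?_⟩)
      simp only [hB3]
      rw [if_pos (show Split p q Tb from hs')]
      exact mem_filter.2 ⟨hG, hq, e2⟩
    · refine mem_union_left _ (mem_union_right _ (mem_biUnion.2
        ⟨q, mem_filter.2 ⟨mem_univ _, hσ⟩, ?_⟩))
      simp only [hB2]
      rw [if_pos (show Split p q Ta from hs)]
      exact mem_filter.2 ⟨hG, hq, e1⟩
  have hc : (#((Gs p a).filter (Bad p a n)) : ℝ) ≤ #B1 + ∑ x, (#(B1' x) : ℝ) +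
      ∑ q ∈ Qnear p (k * k * Tb), (#(B2 q) : ℝ) + ∑ q, (#(B3 q) : ℝ) := by
    have := (card_le_card hsub).trans ((card_union_le _ _).trans (Nat.add_le_add
      ((card_union_le _ _).trans (Nat.add_le_add ((card_union_le _ _).trans
      (Nat.add_le_add_left card_biUnion_le _)) card_biUnion_le)) card_biUnion_le))
    exact_mod_cast this
  have hN0 : (0 : ℝ) ≤ #(Gs p a) := Nat.cast_nonneg _
  have c1 : (#B1 : ℝ) ≤ #(Gs p a) * β := expand_whole p a hsym n d hpos hd h40d hn
  have c1' : ∑ x, (#(B1' x) : ℝ) ≤ k * k * (#(Gs p a) * β) := by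
    have : ∀ x ∈ (univ : Finset (Fin k × Fin k)), (#(B1' x) : ℝ) ≤ #(Gs p a) * β := by
      intro x _
      simp only [hB1']
      split_ifs with h
      · simp only [card_empty, Nat.cast_zero]; positivity
      · exact expand_blk p a hsym n hpos _ _ h (h40 _ _) hn
    refine (sum_le_sum this).trans (le_of_eq ?_)
    simp
  have c2 : ∑ q ∈ Qnear p (k * k * Tb), (#(B2 q) : ℝ) ≤
      #(Qnear p (k * k * Tb)) * (#(Gs p a) / 2 ^ (d * Ta / 2)) := by
    rw [← nsmul_eq_mul, ← sum_const]
    refine sum_le_sum fun q _ => ?_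
    simp only [hB2]
    split_ifs with h
    · rw [le_div_iff₀ (by positivity), mul_comm]
      exact medium_bound p q a n d L Ta hd hTa1 hTa2 h
    · simp only [card_empty, Nat.cast_zero]; positivity
  have hV : Fintype.card V = k * n := by
    rw [← card_univ, card_eq_sum_card_fiberwise (f := p) (t := univ) (fun _ _ => mem_univ _)]
    simp [hn]
  have hk0 : (0 : ℝ) < k := by exact_mod_cast (show 0 < k by omega)
  have c3 : ∑ q : V → Fin k, (#(B3 q) : ℝ) ≤
      k ^ (k * n) * (#(Gs p a) / (2 * k ^ k) ^ n) := by
    have : ∀ q ∈ (univ : Finset (V → Fin k)), (#(B3 q) : ℝ) ≤ #(Gs p a) / (2 * k ^ k) ^ n := by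
      intro q _
      simp only [hB3]
      split_ifs with h
      · rw [le_div_iff₀ (by positivity), mul_comm]
        exact far_bound p q a hsym hpos n L θ Tb hk hn (by omega) hθ hA hTle hn4 h
      · simp only [card_empty, Nat.cast_zero]; positivity
    refine (sum_le_sum this).trans (le_of_eq ?_)
    rw [sum_const, card_univ, Fintype.card_fun, Fintype.card_fin, hV, nsmul_eq_mul]
    push_cast
    ring
  have c3' : (k : ℝ) ^ (k * n) * (#(Gs p a) / (2 * k ^ k) ^ n) = #(Gs p a) * (1 / 2) ^ n := by
    rw [mul_pow, ← pow_mul, div_pow, one_pow]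
    field_simp
  rw [c3'] at c3
  calc _ ≤ _ := hc
    _ ≤ #(Gs p a) * β + k * k * (#(Gs p a) * β) +
        #(Qnear p (k * k * Tb)) * (#(Gs p a) / 2 ^ (d * Ta / 2)) + #(Gs p a) * (1 / 2) ^ n := by
      gcongr
    _ = _ := by ring

end RSBM

/-! ### Asymptotics and the probability in the block model -/

namespace RSBM
open Finset
open scoped Classical

variable {k : ℕ}

lemma exists_poly_le_two_pow (e : ℕ) : ∃ N, ∀ A, N ≤ A → (2 * A + 1) ^ e ≤ 2 ^ A := by
  have h := tendsto_pow_const_div_const_pow_of_one_lt e (one_lt_two (α := ℝ))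
  have h2 := h.eventually (gt_mem_nhds (show (0 : ℝ) < 1 / 3 ^ e by positivity))
  obtain ⟨N, hN⟩ := eventually_atTop.1 h2
  refine ⟨N + 1, fun A hA => ?_⟩
  have h3 := hN A (by omega)
  rw [div_lt_div_iff₀ (by positivity) (by positivity), one_mul, ← mul_pow] at h3
  have h4 : (A * 3) ^ e < 2 ^ A := by exact_mod_cast h3
  exact (Nat.pow_le_pow_left (by omega) e).trans h4.le

/-- The number of partitions near `p` is beaten by the gain for a single one of them. The weight in
`Qnear_card` is `X = 2 ^ s`; the constants make the number of partitions at most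
`k ! * 2 ^ (n / c)`, whereas the gain is of order `2 ^ (2 n / c)`. -/
lemma near_term {V : Type} [Fintype V] (p : V → Fin k) (n d L c s Q Ta Tb : ℕ) (hk : 2 ≤ k)
    (hL : 1 ≤ L) (hd : 1 ≤ d)
    (hV : Fintype.card V = k * n) (hc : c = 4 * L * (k * k)) (hs : s = 4 * (k * k) * c)
    (hQ : Q = 2 * c * s * (k * k)) (hTa : Ta = n / (L * d * (k * k))) (hTb : Tb = n / Q) :
    (#(Qnear p (k * k * Tb)) : ℝ) / 2 ^ (d * Ta / 2) ≤
      k.factorial * 2 ^ (d + 2) * ((2 : ℝ) ^ (-(1 : ℝ) / c)) ^ n := by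
  have hk0 : (0 : ℝ) < k := by exact_mod_cast (show 0 < k by omega)
  have hL0 : (0 : ℝ) < L := by exact_mod_cast hL
  have hd0 : (0 : ℝ) < d := by exact_mod_cast hd
  have hcR : (c : ℝ) = 4 * L * (k * k) := by rw [hc]; push_cast; ring
  have hc0 : (0 : ℝ) < c := by rw [hcR]; positivity
  have hsR : (s : ℝ) = 4 * (k * k) * c := by rw [hs]; push_cast; ring
  have hs0 : (0 : ℝ) < s := by rw [hsR]; positivity
  have hn0 : (0 : ℝ) ≤ n := Nat.cast_nonneg n
  have e1 : (((2 ^ s : ℕ) : ℝ)) ^ (k * k * Tb) ≤ (2 : ℝ) ^ ((n : ℝ) / (2 * c)) := by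
    push_cast
    rw [← pow_mul, ← Real.rpow_natCast]
    refine Real.rpow_le_rpow_of_exponent_le one_le_two ?_
    rw [le_div_iff₀ (by positivity)]
    have : s * (k * k * Tb) * (2 * c) ≤ n := by
      calc s * (k * k * Tb) * (2 * c) = Q * Tb := by rw [hQ]; ring
        _ ≤ n := by rw [hTb]; exact Nat.mul_div_le _ _
    exact_mod_cast this
  have e2 : Real.exp (k * Fintype.card V / ((2 ^ s : ℕ) : ℝ)) ≤
      (2 : ℝ) ^ ((n : ℝ) / (2 * c)) := by
    rw [Real.rpow_def_of_pos two_pos]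
    refine Real.exp_le_exp.2 ?_
    have h1 : (s : ℝ) ≤ ((2 ^ s : ℕ) : ℝ) := by exact_mod_cast Nat.lt_two_pow_self.le
    have h2 := Real.log_two_gt_d9
    rw [hV]
    calc (k : ℝ) * ((k * n : ℕ) : ℝ) / ((2 ^ s : ℕ) : ℝ) ≤ k * ((k * n : ℕ) : ℝ) / s := by gcongr
      _ = 1 / 2 * ((n : ℝ) / (2 * c)) := by rw [hsR]; push_cast; field_simp; norm_num
      _ ≤ Real.log 2 * ((n : ℝ) / (2 * c)) := by gcongr; linarith
  have e3 : (2 : ℝ) ^ (2 * (n : ℝ) / c - (d + 2)) ≤ 2 ^ (d * Ta / 2) := by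
    rw [← Real.rpow_natCast]
    refine Real.rpow_le_rpow_of_exponent_le one_le_two ?_
    have h1 : d * Ta ≤ 2 * (d * Ta / 2) + 1 := by omega
    have h1' : (d : ℝ) * Ta ≤ 2 * ((d * Ta / 2 : ℕ) : ℝ) + 1 := by exact_mod_cast h1
    have h2 : n ≤ L * d * (k * k) * (Ta + 1) := by
      rw [hTa]; exact (Nat.lt_mul_div_succ _ (by positivity)).le
    have h2' : (n : ℝ) ≤ L * d * (k * k) * (Ta + 1) := by exact_mod_cast h2
    have h3 : 2 * (n : ℝ) / c ≤ (d * Ta + d) / 2 := by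
      rw [div_le_div_iff₀ hc0 two_pos, hcR]
      nlinarith
    linarith
  have e4 : (0 : ℝ) < (2 : ℝ) ^ (2 * (n : ℝ) / c - (d + 2)) := by positivity
  calc (#(Qnear p (k * k * Tb)) : ℝ) / 2 ^ (d * Ta / 2)
      ≤ (k.factorial * ((2 : ℝ) ^ ((n : ℝ) / (2 * c)) * (2 : ℝ) ^ ((n : ℝ) / (2 * c)))) /
        (2 : ℝ) ^ (2 * (n : ℝ) / c - (d + 2)) := by
        refine div_le_div₀ (by positivity) ?_ e4 e3
        refine (Qnear_card p _ (2 ^ s) Nat.one_le_two_pow).trans ?_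
        gcongr
    _ = k.factorial * 2 ^ (d + 2) * ((2 : ℝ) ^ (-(1 : ℝ) / c)) ^ n := by
        rw [← Real.rpow_natCast, ← Real.rpow_natCast, ← Real.rpow_mul (by norm_num),
          ← Real.rpow_add two_pos, mul_div_assoc, ← Real.rpow_sub two_pos, mul_assoc,
          ← Real.rpow_add two_pos]
        congr 2
        push_cast
        field_simp
        ring

lemma isEqui_iff (n : ℕ) (p : Fin (k * n) → Fin k) :
    IsEquiPartition k n p ↔ ∀ i, #(univ.filter fun v => p v = i) = n := by
  refine forall_congr' fun i => ?_
  rw [← Set.ncard_coe_finset]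
  have : p ⁻¹' {i} = ((univ.filter fun v => p v = i : Finset _) : Set (Fin (k * n))) := by
    ext; simp
  rw [this]

lemma compat_iff (n : ℕ) (a : Fin k → Fin k → ℕ) (p : Fin (k * n) → Fin k)
    (G : SimpleGraph (Fin (k * n))) : Compat k n a p G ↔ Cmp p a G := by
  refine forall_congr' fun v => forall_congr' fun j => ?_
  have : p ⁻¹' {j} ∩ G.neighborSet v = (nbc p G v j : Set (Fin (k * n))) := by
    ext; simp [mem_nbc]
  rw [degIn, this, Set.ncard_coe_finset]

lemma mem_Gs {V : Type} [Fintype V] (p : V → Fin k) (a : Fin k → Fin k → ℕ) (G : SimpleGraph V) :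
    G ∈ Gs p a ↔ Cmp p a G := by simp [Gs]

/-- A bound on the ratio of two sets of pairs, from a bound over every first coordinate. -/
lemma ncard_le_of_fibers {α β : Type} [Fintype α] [Fintype β] (F F' : α → β → Prop) (x : ℝ)
    (h : ∀ a, ({b | F a b}.ncard : ℝ) ≤ x * {b | F' a b}.ncard) :
    ({y : α × β | F y.1 y.2}.ncard : ℝ) ≤ x * {y : α × β | F' y.1 y.2}.ncard := by
  have key : ∀ F : α → β → Prop, {y : α × β | F y.1 y.2}.ncard = ∑ a, {b | F a b}.ncard := by
    intro F
    have e1 : {y : α × β | F y.1 y.2} = ((univ.filter fun y : α × β => F y.1 y.2 : Finset _) :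
        Set (α × β)) := by ext; simp
    have e2 : ∀ a, {b | F a b}.ncard = #(univ.filter (F a)) := by
      intro a
      rw [← Set.ncard_coe_finset]
      congr 1
      ext; simp
    rw [e1, Set.ncard_coe_finset, card_filter, Fintype.sum_prod_type]
    exact sum_congr rfl fun a _ => by rw [e2, card_filter]
  rw [key, key]
  push_cast
  rw [mul_sum]
  exact sum_le_sum fun a _ => h a

/-- An event that is unlikely given every equipartition is unlikely. -/
lemma rsbmP_le (n : ℕ) (a : Fin k → Fin k → ℕ)
    (E : (Fin (k * n) → Fin k) → SimpleGraph (Fin (k * n)) → Prop) (x : ℝ) (hx : 0 ≤ x)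
    (h : ∀ p, IsEquiPartition k n p → ∃ S : Finset (SimpleGraph (Fin (k * n))),
      (∀ G, Cmp p a G → E p G → G ∈ S) ∧ (#S : ℝ) ≤ #(Gs p a) * x) :
    rsbmP k n a E ≤ x := by
  refine div_le_of_le_mul₀ (Nat.cast_nonneg _) hx ?_
  refine ncard_le_of_fibers (fun p G => IsEquiPartition k n p ∧ Compat k n a p G ∧ E p G)
    (fun p G => IsEquiPartition k n p ∧ Compat k n a p G) x fun p => ?_
  by_cases hp : IsEquiPartition k n p
  · obtain ⟨S, hS, hSx⟩ := h p hp
    have e1 : {G | IsEquiPartition k n p ∧ Compat k n a p G ∧ E p G}.ncard ≤ #S := by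
      rw [← Set.ncard_coe_finset]
      exact Set.ncard_le_ncard (fun G hG => hS G ((compat_iff n a p G).1 hG.2.1) hG.2.2)
        (Finset.finite_toSet S)
    have e2 : {G | IsEquiPartition k n p ∧ Compat k n a p G}.ncard = #(Gs p a) := by
      rw [← Set.ncard_coe_finset]
      congr 1
      ext G
      simp [hp, compat_iff, mem_Gs]
    rw [e2, mul_comm x]
    exact le_trans (by exact_mod_cast e1) hSx
  · simp [hp]

/-- Uniqueness of the clusters when all entries of `a` are large in terms of `k`. -/
theorem main (k : ℕ) (hk : 2 ≤ k) : ∃ M : ℕ, ∀ d : ℕ, ∀ a : Fin k → Fin k → ℕ,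
      (∀ i j, 0 < a i j) → (∀ i j, a i j = a j i) → (∀ i, ∑ j, a i j = d) →
      (∀ i j, M ≤ a i j) →
      Tendsto
        (fun n : ℕ => rsbmP k n a (fun p G =>
          ∃ q : Fin (k * n) → Fin k,
            IsEquiPartition k n q ∧ Compat k n a q G ∧
              Set.range (fun i => q ⁻¹' {i}) ≠ Set.range (fun i => p ⁻¹' {i})))
        atTop (nhds 0) := by
  obtain ⟨L, hL⟩ : ∃ L, L = expL k := ⟨_, rfl⟩
  have hL16 : 16 ≤ L := hL ▸ expL_large k
  -- intermediate partitions contribute `2 ^ (-n / c)`; the weight used to count them is `2 ^ s`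
  obtain ⟨c, hc⟩ : ∃ c, c = 4 * L * (k * k) := ⟨_, rfl⟩
  obtain ⟨s, hs⟩ : ∃ s, s = 4 * (k * k) * c := ⟨_, rfl⟩
  -- the scale `n / Q` separates the intermediate partitions from the far ones
  obtain ⟨Q, hQ⟩ : ∃ Q, Q = 2 * c * s * (k * k) := ⟨_, rfl⟩
  -- far partitions gain a factor `√θ` for every vertex that sees at least `θ` pairs
  obtain ⟨θ, hθ⟩ : ∃ θ, θ = (8 * k ^ (2 * k)) ^ (6 * L) := ⟨_, rfl⟩
  obtain ⟨N, hN⟩ := exists_poly_le_two_pow (6 * θ)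
  have hc0 : 0 < c := by rw [hc]; positivity
  have hs0 : 0 < s := by rw [hs]; positivity
  have hQk : 2 * k < Q := by
    have : Q = 2 * k * (c * s * k) := by rw [hQ]; ring
    rw [this]
    have h1 : 1 ≤ c * s := Nat.mul_pos hc0 hs0
    have h2 : 2 ≤ c * s * k := Nat.mul_le_mul h1 hk
    nlinarith
  -- `40` serves expansion, `N` the polynomial loss per pair; entries of at least `3 θ Q` make the
  -- `R * T0` pairs needed for far partitions fit below the scale `n / Q`
  refine ⟨max (max 40 N) (3 * θ * Q), fun d a hpos hsym hd hM => ?_⟩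
  have h40 : ∀ i j, 40 ≤ a i j := fun i j =>
    ((le_max_left _ _).trans (le_max_left _ _)).trans (hM i j)
  have hA : ∀ i j, (2 * a i j + 1) ^ (6 * θ) ≤ 2 ^ a i j := fun i j =>
    hN _ (((le_max_right _ _).trans (le_max_left _ _)).trans (hM i j))
  have hAQ : ∀ i j, 3 * θ * Q ≤ a i j := fun i j => (le_max_right _ _).trans (hM i j)
  have had : ∀ i j, a i j ≤ d := fun i j => by
    rw [← hd i]
    exact single_le_sum (f := a i) (fun _ _ => Nat.zero_le _) (mem_univ j)
  have hd0 : 1 ≤ d := by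
    have i0 : Fin k := ⟨0, by omega⟩
    have := h40 i0 i0
    have := had i0 i0
    omega
  set bd : ℕ → ℝ := fun n => (1 + k * k) * (Real.exp (40 * (2 * k + 11)) / n) +
    k.factorial * 2 ^ (d + 2) * ((2 : ℝ) ^ (-(1 : ℝ) / c)) ^ n + (1 / 2) ^ n with hbd
  have hlim : Tendsto bd atTop (nhds 0) := by
    have t1 : Tendsto (fun n : ℕ => Real.exp (40 * (2 * k + 11)) / (n : ℝ)) atTop (nhds 0) :=
      tendsto_const_div_atTop_nhds_zero_nat _
    have t2 : Tendsto (fun n : ℕ => ((2 : ℝ) ^ (-(1 : ℝ) / c)) ^ n) atTop (nhds 0) := by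
      refine tendsto_pow_atTop_nhds_zero_of_lt_one (by positivity)
        (Real.rpow_lt_one_of_one_lt_of_neg one_lt_two ?_)
      have : (0 : ℝ) < c := by exact_mod_cast hc0
      exact div_neg_of_neg_of_pos (by norm_num) this
    have t3 : Tendsto (fun n : ℕ => ((1 : ℝ) / 2) ^ n) atTop (nhds 0) :=
      tendsto_pow_atTop_nhds_zero_of_lt_one (by norm_num) (by norm_num)
    have := ((t1.const_mul ((1 : ℝ) + k * k)).add
      (t2.const_mul ((k.factorial : ℝ) * 2 ^ (d + 2)))).add t3
    simpa [hbd] using this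
  refine squeeze_zero' (Eventually.of_forall fun n => by unfold rsbmP; positivity) ?_ hlim
  filter_upwards [eventually_ge_atTop (4 * L * d * (k * k))] with n hn
  have hkk : 1 ≤ k * k := Nat.mul_pos (by omega) (by omega)
  have hbd0 : 0 ≤ bd n := by simp only [hbd]; positivity
  have hn0 : 0 < n := lt_of_lt_of_le (by positivity) hn
  refine rsbmP_le n a _ _ hbd0 fun p hp => ?_
  have hp' := (isEqui_iff n p).1 hp
  obtain ⟨Ta, hTa⟩ : ∃ Ta, Ta = n / (L * d * (k * k)) := ⟨_, rfl⟩
  obtain ⟨Tb, hTb⟩ : ∃ Tb, Tb = n / Q := ⟨_, rfl⟩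
  have hb := bad_count p a hsym hpos n d θ Ta Tb hd hk hp' h40 (by rw [hθ, hL]) hA ?_ ?_ ?_ ?_ ?_
  · have hnt := near_term p n d L c s Q Ta Tb hk (by omega) hd0 (by simp) hc hs hQ hTa hTb
    refine ⟨(Gs p a).filter (Bad p a n), ?_, ?_⟩
    · rintro G hG ⟨q, h1, h2, h3⟩
      refine mem_filter.2 ⟨(mem_Gs p a G).2 hG, q, (isEqui_iff n q).1 h1,
        (compat_iff n a q G).1 h2, ?_⟩
      rintro ⟨σ, hσ⟩
      apply h3
      have : (fun i => p ⁻¹' {i}) = (fun i => q ⁻¹' {i}) ∘ σ := by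
        funext i
        ext v
        simp [hσ]
      rw [this, σ.surjective.range_comp]
    · refine hb.trans ?_
      simp only [hbd]
      gcongr
  · intro i j
    rw [← hL, hTb, Nat.le_div_iff_mul_le (by omega)]
    calc 6 * L * θ * (n / (2 * L * a i j)) * Q = 2 * L * (3 * θ * Q) * (n / (2 * L * a i j)) := by
          ring
      _ ≤ 2 * L * a i j * (n / (2 * L * a i j)) := by gcongr; exact hAQ i j
      _ ≤ n := Nat.mul_div_le _ _
  · intro i j
    rw [← hL]
    refine le_trans ?_ hn
    calc 4 * L * a i j ≤ 4 * L * d := Nat.mul_le_mul_left _ (had i j)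
      _ ≤ 4 * L * d * (k * k) := Nat.le_mul_of_pos_right _ hkk
  · rw [hTa]
    refine Nat.div_pos (le_trans ?_ hn) (by positivity)
    have : 4 * L * d * (k * k) = 4 * (L * d * (k * k)) := by ring
    omega
  · rw [← hL, hTa]
    refine le_trans (le_of_eq ?_) (Nat.mul_div_le n (L * d * (k * k)))
    ring
  · have h1 : Q * Tb ≤ n := by rw [hTb]; exact Nat.mul_div_le _ _
    rcases Nat.eq_zero_or_pos Tb with h | h
    · rw [h]; omega
    · refine lt_of_lt_of_le ?_ h1
      rw [← mul_assoc]
      exact Nat.mul_lt_mul_of_pos_right hQk h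

end RSBM

/-- Theorem 3.1 of the paper: a.a.s. uniqueness of the clusters.
Under hypotheses (1) and (2) on the symmetric positive matrix `A` — where
`B i = max {a i ℓ : ℓ ≠ i}` — and provided all entries of `A` are sufficiently large
(depending only on `k`, `C`, `δ`, `ε`), the probability that the random graph admits an
equipartition `q` into `k` size-`n` clusters, different from the planted one as an unordered
family, whose clusters satisfy the same intra- and inter-cluster regularity constraints,
tends to `0` as `n → ∞`. -/
theorem rsbm_clusters_unique (k : ℕ) (hk : 3 ≤ k)
    (C : ℝ) (hC : 0 < C)
    (δ ε : Fin k → Fin k → ℝ)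
    (hδr : ∀ i j, 0 < δ i j ∧ δ i j < 1 / 4)
    (hεr : ∀ i j, 0 < ε i j ∧ ε i j < 1 / 4) :
    ∃ M : ℕ, ∀ d : ℕ, ∀ a : Fin k → Fin k → ℕ,
      (∀ i j, 0 < a i j) →
      (∀ i j, a i j = a j i) →
      (∀ i, ∑ j, a i j = d) →
      (∀ i j, M ≤ a i j) →
      (∀ i, (((Finset.univ.erase i).sup (a i) : ℕ) : ℝ) < C * a i i) →
      ((∃ i j, a i i ≠ a j j) →
        (∀ i j, a i i < a j j → (1 / 2 + 2 * δ i j) * (a j j : ℝ) ≤ (a i i : ℝ)) ∧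
        (∀ i j, a j j < a i i →
          (a i i : ℝ) - (a j j : ℝ) < (((Finset.univ.erase j).sup (a j) : ℕ) : ℝ) →
          (((Finset.univ.erase j).sup (a j) : ℕ) : ℝ) ≤ (1 / 2 - 2 * ε i j) * a i i)) →
      Tendsto
        (fun n : ℕ => rsbmP k n a (fun p G =>
          ∃ q : Fin (k * n) → Fin k,
            IsEquiPartition k n q ∧ Compat k n a q G ∧
              Set.range (fun i => q ⁻¹' {i}) ≠ Set.range (fun i => p ⁻¹' {i})))
        atTop (nhds 0) := by
  obtain ⟨M, hM⟩ := RSBM.main k (by omega)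
  exact ⟨M, fun d a h1 h2 h3 h4 _ _ => hM d a h1 h2 h3 h4⟩
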